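/- arXiv:1309.6402 — 13 statements merged into one kernel-verified Lean document; each statement's English description precedes it below -/
import Mathlib

section
/- For every nonempty closed convex set S ⊆ X and every x ∈ X, there exists a unique point p ∈ S such that D(p,x) ≤ D(c,x) for all c ∈ S (this point is called the Bregman projection of x onto S, written P_S(x)). -/
/-!
For fixed `x`, the function `g y = D y x` is `f` minus an affine function, hence strictly convex and
continuous; strictness makes the minimizer over `S` unique. For existence, `g` vanishes at `x` and
is strictly positive elsewhere (the graph of `f` lies strictly above its tangent), so by compactness
`g ≥ m > 0` on the unit sphere around `x`. Convexity along rays from `x` propagates this to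
`g y ≥ m * ‖y - x‖` for `‖y - x‖ ≥ 1`, so `g` is coercive and attains its minimum on the
closed set `S`.
-/

open scoped RealInnerProductSpace
open Filter Topology

/-- The tangent inequality, obtained by restricting `f` to the line through `y` and `z`. -/
lemma tangent_le_of_convexOn_univ
    {X : Type*} [NormedAddCommGroup X] [InnerProductSpace ℝ X] [CompleteSpace X]
    {f : X → ℝ} {v y : X} (hf : ConvexOn ℝ Set.univ f) (hv : HasGradientAt f v y) (z : X) :
    f y + ⟪v, z - y⟫ ≤ f z := by
  have hline : ConvexOn ℝ Set.univ (f ∘ AffineMap.lineMap (k := ℝ) y z) := by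
    simpa using hf.comp_affineMap (AffineMap.lineMap (k := ℝ) y z)
  have hderiv : HasDerivAt (f ∘ AffineMap.lineMap (k := ℝ) y z) ⟪v, z - y⟫ 0 := by
    have h₁ : HasFDerivAt f (InnerProductSpace.toDual ℝ X v)
        (AffineMap.lineMap (k := ℝ) y z 0) := by
      simpa using hv.hasFDerivAt
    simpa using h₁.comp_hasDerivAt (0 : ℝ) AffineMap.hasDerivAt_lineMap
  have hslope := hline.le_slope_of_hasDerivAt (Set.mem_univ 0) (Set.mem_univ 1) one_pos hderiv
  simp [slope_def_field] at hslope
  linarith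

/-- A strictly convex function with zero value at `x` and nonnegative elsewhere is positive
away from `x`. -/
lemma pos_of_strictConvexOn_univ {X : Type*} [AddCommGroup X] [Module ℝ X]
    {g : X → ℝ} {x y : X} (hg : StrictConvexOn ℝ Set.univ g) (hnonneg : ∀ y, 0 ≤ g y)
    (hx : g x = 0) (hy : y ≠ x) : 0 < g y := by
  refine (hnonneg y).lt_of_ne fun h => hy ?_
  exact hg.eq_of_isMinOn (fun z _ => by simpa [← h] using hnonneg z)
    (fun z _ => by simpa [hx] using hnonneg z) (Set.mem_univ _) (Set.mem_univ _)

/-- A lower bound on the unit sphere around a zero of a convex function grows linearly along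
rays. -/
lemma linear_growth_of_convexOn_univ {X : Type*} [NormedAddCommGroup X] [NormedSpace ℝ X]
    {g : X → ℝ} {x : X} {m : ℝ} (hg : ConvexOn ℝ Set.univ g) (hx : g x = 0)
    (hm : ∀ z ∈ Metric.sphere x 1, m ≤ g z) {y : X} (hy : 1 ≤ ‖y - x‖) :
    m * ‖y - x‖ ≤ g y := by
  set r := ‖y - x‖ with hr
  have hr0 : 0 < r := by linarith
  have hmem : (1 - r⁻¹) • x + r⁻¹ • y ∈ Metric.sphere x 1 := by
    have h : (1 - r⁻¹) • x + r⁻¹ • y - x = r⁻¹ • (y - x) := by module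
    rw [mem_sphere_iff_norm, h, norm_smul, norm_inv, Real.norm_of_nonneg hr0.le, ← hr,
      inv_mul_cancel₀ hr0.ne']
  have h := hg.2 (Set.mem_univ x) (Set.mem_univ y)
    (sub_nonneg.2 (inv_le_one_of_one_le₀ hy)) (inv_nonneg.2 hr0.le) (sub_add_cancel 1 r⁻¹)
  rw [hx, smul_zero, zero_add, smul_eq_mul, inv_mul_eq_div] at h
  exact (le_div_iff₀ hr0).1 ((hm _ hmem).trans h)

/-- For every nonempty closed convex set `S ⊆ X` and every `x ∈ X`,
there exists a unique point `p ∈ S` such that `D(p,x) ≤ D(c,x)` for all `c ∈ S`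
(the Bregman projection of `x` onto `S`). -/
theorem bregman_projection_exists_unique
    {X : Type*} [NormedAddCommGroup X] [InnerProductSpace ℝ X] [FiniteDimensional ℝ X]
    (f : X → ℝ) (f' : X → X)
    (hf : StrictConvexOn ℝ Set.univ f)
    (hf' : ∀ x, HasGradientAt f (f' x) x)
    (D : X → X → ℝ)
    (hD : ∀ x y, D x y = f x - f y - ⟪f' y, x - y⟫)
    (S : Set X) (hSne : S.Nonempty) (hScl : IsClosed S) (hScv : Convex ℝ S)
    (x : X) :
    ∃! p, p ∈ S ∧ ∀ c ∈ S, D p x ≤ D c x := by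
  have hx : D x x = 0 := by simp [hD]
  have hnonneg : ∀ y, 0 ≤ D y x := fun y => by
    have := tangent_le_of_convexOn_univ hf.convexOn (hf' x) y
    rw [hD]
    linarith
  have hcont : Continuous fun y => D y x := by
    have hfc : Continuous f := continuous_iff_continuousAt.2 fun y => (hf' y).continuousAt
    simp only [hD]
    fun_prop
  have hconv : StrictConvexOn ℝ Set.univ fun y => D y x := by
    refine ⟨convex_univ, fun y _ z _ hyz a b ha hb hab => ?_⟩
    have h := hf.2 (Set.mem_univ y) (Set.mem_univ z) hyz ha hb hab
    obtain rfl : b = 1 - a := by linarith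
    simp only [hD, inner_sub_right, inner_add_right, inner_smul_right, smul_eq_mul] at h ⊢
    linarith
  obtain ⟨m, hm0, hm⟩ := (isCompact_sphere x 1).exists_forall_le' hcont.continuousOn
    (a := 0) fun z hz => pos_of_strictConvexOn_univ (g := fun y => D y x) hconv hnonneg hx
      (Metric.ne_of_mem_sphere (ε := 1) hz one_ne_zero)
  obtain ⟨c₀, hc₀⟩ := hSne
  have hfar : ∀ᶠ y in cocompact X ⊓ 𝓟 S, D c₀ x ≤ D y x := by
    refine Filter.Eventually.filter_mono inf_le_left ?_
    -- Outside this ball the linear lower bound `m * ‖y - x‖` already exceeds `D c₀ x`.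
    filter_upwards [(isCompact_closedBall x (max 1 (D c₀ x / m))).compl_mem_cocompact] with y hy
    rw [Set.mem_compl_iff, mem_closedBall_iff_norm, not_le, max_lt_iff, div_lt_iff₀' hm0] at hy
    exact hy.2.le.trans (linear_growth_of_convexOn_univ (g := fun y => D y x)
      hconv.convexOn hx hm hy.1.le)
  obtain ⟨p, hpS, hp⟩ := hcont.continuousOn.exists_isMinOn' hScl hc₀ hfar
  exact ⟨p, ⟨hpS, fun c hc => hp hc⟩, fun q ⟨hqS, hq⟩ =>
    (hconv.subset (Set.subset_univ S) hScv).eq_of_isMinOn (fun c hc => hq c hc) hp hqS hpS⟩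
end

section
/- Let S ⊆ X be nonempty, closed and convex, let x ∈ X and p ∈ S. Then p is the Bregman projection P_S(x) (i.e. D(p,x) ≤ D(c,x) for all c ∈ S) if and only if ⟨∇f(x) − ∇f(p), c − p⟩ ≤ 0 for every c ∈ S. -/
/-!
The map `y ↦ D y x` is `f` minus an affine function, so its gradient at `p` is `f' p - f' x`.
If `p` minimises it over `S`, this gradient pairs nonnegatively with every feasible direction
`c - p`. Conversely, the gradient inequality `f p + ⟪f' p, c - p⟫ ≤ f c` for the convex function `f`
bounds `D c x - D p x` below by `⟪f' p - f' x, c - p⟫`.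
-/

open scoped RealInnerProductSpace
open Filter Topology

/-- A convex function lies above its tangent hyperplane at `p`: along the line through `p` and `c`, the
derivative at `p` is at most the slope of the chord. -/
theorem gradient_inequality
    {X : Type*} [NormedAddCommGroup X] [InnerProductSpace ℝ X] [CompleteSpace X]
    {f : X → ℝ} {g p : X} (hf : ConvexOn ℝ Set.univ f) (hg : HasGradientAt f g p) (c : X) :
    f p + ⟪g, c - p⟫ ≤ f c := by
  have hconv : ConvexOn ℝ Set.univ (f ∘ AffineMap.lineMap (k := ℝ) p c) :=
    hf.comp_affineMap (AffineMap.lineMap p c)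
  have hder : HasDerivAt (f ∘ AffineMap.lineMap (k := ℝ) p c) ⟪g, c - p⟫ 0 := by
    have h0 : HasFDerivAt f (InnerProductSpace.toDual ℝ X g)
        (AffineMap.lineMap (k := ℝ) p c 0) := by
      simpa using hg.hasFDerivAt
    simpa using h0.comp_hasDerivAt (0 : ℝ) AffineMap.hasDerivAt_lineMap
  have h := hconv.le_slope_of_hasDerivAt (Set.mem_univ 0) (Set.mem_univ 1) one_pos hder
  simp [slope_def_field] at h
  linarith

/-- Let `S ⊆ X` be nonempty, closed and convex, `x ∈ X` and `p ∈ S`.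
Then `p` is the Bregman projection of `x` onto `S` (i.e. `D(p,x) ≤ D(c,x)` for all `c ∈ S`)
iff `⟪∇f(x) − ∇f(p), c − p⟫ ≤ 0` for every `c ∈ S`. -/
theorem bregman_projection_characterization_inner
    {X : Type*} [NormedAddCommGroup X] [InnerProductSpace ℝ X] [FiniteDimensional ℝ X]
    (f : X → ℝ) (f' : X → X)
    (hf : StrictConvexOn ℝ Set.univ f)
    (hf' : ∀ x, HasGradientAt f (f' x) x)
    (D : X → X → ℝ)
    (hD : ∀ x y, D x y = f x - f y - ⟪f' y, x - y⟫)
    (S : Set X) (hSne : S.Nonempty) (hScl : IsClosed S) (hScv : Convex ℝ S)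
    (x : X) (p : X) (hp : p ∈ S) :
    (∀ c ∈ S, D p x ≤ D c x) ↔ (∀ c ∈ S, ⟪f' x - f' p, c - p⟫ ≤ 0) := by
  have hD_sub (c : X) : D c x - D p x = f c - f p - ⟪f' x, c - p⟫ := by
    rw [hD, hD, ← sub_sub_sub_cancel_right c p x, inner_sub_right (f' x) (c - x)]
    ring
  constructor
  · intro hmin c hc
    have hgrad : HasFDerivAt (fun y => f y - ⟪f' x, y⟫)
        (InnerProductSpace.toDual ℝ X (f' p) - innerSL ℝ (f' x)) p :=
      (hf' p).hasFDerivAt.sub (innerSL ℝ (f' x)).hasFDerivAt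
    have hloc : IsLocalMinOn (fun y => f y - ⟪f' x, y⟫) S p := by
      refine IsMinOn.localize fun y hy => ?_
      have h := hD_sub y
      rw [inner_sub_right] at h
      simp only [Set.mem_ofPred_eq]
      linarith [hmin y hy]
    have h := hloc.hasFDerivWithinAt_nonneg hgrad.hasFDerivWithinAt
      (sub_mem_posTangentConeAt_of_segment_subset (hScv.segment_subset hp hc))
    simp only [sub_apply, InnerProductSpace.toDual_apply_apply,
      innerSL_apply_apply] at h
    rw [inner_sub_left]
    linarith
  · intro hvar c hc
    have h := hvar c hc
    rw [inner_sub_left] at h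
    linarith [gradient_inequality hf.convexOn (hf' p) c, hD_sub c]
end

section
/- Let S ⊆ X be nonempty, closed and convex, let x ∈ X and p ∈ S. Then p is the Bregman projection P_S(x) if and only if D(c,x) ≥ D(c,p) + D(p,x) for every c ∈ S. -/
open scoped RealInnerProductSpace
open Filter Topology

/-!
Expanding the definition, `D c x - D c p - D p x = ⟪f' p - f' x, c - p⟫`, so the three-point
inequality says that this inner product is nonnegative on `S`. As `f' p - f' x` is the gradient of
`D · x` at `p`, this is the first-order optimality condition for minimizing `D · x` over the convex
set `S`, which gives the forward direction. Conversely, the three-point inequality implies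
minimality because `D c p ≥ 0`, the gradient inequality for the convex function `f`.
-/

/-- Gradient inequality: a convex function lies above its tangent hyperplanes. -/
lemma convex_gradient_inequality
    {X : Type*} [NormedAddCommGroup X] [InnerProductSpace ℝ X] [CompleteSpace X]
    {f : X → ℝ} {g p : X} (hf : ConvexOn ℝ Set.univ f) (hg : HasGradientAt f g p) (c : X) :
    ⟪g, c - p⟫ ≤ f c - f p := by
  -- Restrict `f` to the line through `p` and `c`, and compare with the secant slope on `[0, 1]`.
  have hconv : ConvexOn ℝ Set.univ (f ∘ AffineMap.lineMap (k := ℝ) p c) := by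
    simpa using hf.comp_affineMap (AffineMap.lineMap (k := ℝ) p c)
  have hderiv : HasDerivAt (f ∘ AffineMap.lineMap (k := ℝ) p c) ⟪g, c - p⟫ 0 := by
    have h1 : HasFDerivAt f (InnerProductSpace.toDual ℝ X g)
        (AffineMap.lineMap (k := ℝ) p c (0 : ℝ)) := by
      simpa using hg.hasFDerivAt
    simpa using h1.comp_hasDerivAt (0 : ℝ) AffineMap.hasDerivAt_lineMap
  have h := hconv.le_slope_of_hasDerivAt (Set.mem_univ _) (Set.mem_univ 1) zero_lt_one hderiv
  simpa [slope_def_field] using h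

/-- Let `S ⊆ X` be nonempty, closed and convex, `x ∈ X` and `p ∈ S`.
Then `p` is the Bregman projection of `x` onto `S` iff
`D(c,x) ≥ D(c,p) + D(p,x)` for every `c ∈ S`. -/
theorem bregman_projection_characterization_three_point
    {X : Type*} [NormedAddCommGroup X] [InnerProductSpace ℝ X] [FiniteDimensional ℝ X]
    (f : X → ℝ) (f' : X → X)
    (hf : StrictConvexOn ℝ Set.univ f)
    (hf' : ∀ x, HasGradientAt f (f' x) x)
    (D : X → X → ℝ)
    (hD : ∀ x y, D x y = f x - f y - ⟪f' y, x - y⟫)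
    (S : Set X) (hSne : S.Nonempty) (hScl : IsClosed S) (hScv : Convex ℝ S)
    (x : X) (p : X) (hp : p ∈ S) :
    (∀ c ∈ S, D p x ≤ D c x) ↔ (∀ c ∈ S, D c x ≥ D c p + D p x) := by
  have key : ∀ c, D c x - D c p - D p x = ⟪f' p, c - p⟫ - ⟪f' x, c - p⟫ := by
    intro c
    simp only [hD, inner_sub_right]
    ring
  constructor
  · intro hmin c hc
    have hD' : HasFDerivAt (fun y => D y x)
        (InnerProductSpace.toDual ℝ X (f' p) - InnerProductSpace.toDual ℝ X (f' x)) p := by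
      have h1 := ((hf' p).hasFDerivAt.sub_const (f x)).sub
        ((InnerProductSpace.toDual ℝ X (f' x)).hasFDerivAt.comp p
          ((hasFDerivAt_id p).sub_const x))
      rw [ContinuousLinearMap.comp_id] at h1
      exact h1.congr_of_eventuallyEq (Eventually.of_forall fun y => by simp [hD])
    have hloc : IsLocalMinOn (fun y => D y x) S p :=
      IsMinOn.localize (fun y hy => hmin y hy)
    have h := hloc.hasFDerivWithinAt_nonneg hD'.hasFDerivWithinAt
      (sub_mem_posTangentConeAt_of_segment_subset (hScv.segment_subset hp hc))
    simp only [sub_apply, InnerProductSpace.toDual_apply_apply] at h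
    linarith [key c]
  · intro h c hc
    have h1 := convex_gradient_inequality hf.convexOn (hf' p) c
    linarith [h c hc, hD c p]
end

section
/- For every nonempty closed convex set S ⊆ X, the Bregman projector P_S : X → X (mapping x to its Bregman projection onto S) is continuous. -/
/-!
The gradient of a differentiable convex function is continuous
(`continuous_of_convexOn_hasGradientAt`): near `x` the function is squeezed between its tangent
plane at `x` and that plane plus a small multiple of the radius, and a tangent plane at a nearby
point, lying below the function, then cannot have a very different slope.

Given this, put `p = P x` and `r > 0`. Up to a constant, `D · y` is `f - ⟪f' y, ·⟫`, so `p` is the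
strict minimiser of `f - ⟪f' x, ·⟫` on `S`, and by compactness there is a gap `δ > 0` between its
values on `S ∩ sphere p r` and its value at `p`. If `f' y` is so close to `f' x` that
`‖f' x - f' y‖ * r < δ`, then `f - ⟪f' y, ·⟫` is still larger on `S ∩ sphere p r` than at `p`. By
convexity its minimiser `P y` cannot lie outside the ball: the segment from `p` to `P y` would cross
the sphere at a point of `S` where the function is at most its value at `p`.
-/

open scoped RealInnerProductSpace
open Filter Topology

/-- A differentiable convex function lies above its tangent planes. -/
lemma add_inner_gradient_le_of_convexOn
    {X : Type*} [NormedAddCommGroup X] [InnerProductSpace ℝ X] [CompleteSpace X]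
    {f : X → ℝ} {g y : X} (hf : ConvexOn ℝ Set.univ f) (hg : HasGradientAt f g y) (z : X) :
    f y + ⟪g, z - y⟫ ≤ f z := by
  have hc : ConvexOn ℝ Set.univ (f ∘ (AffineMap.lineMap y z : ℝ →ᵃ[ℝ] X)) := by
    have := hf.comp_affineMap (AffineMap.lineMap (k := ℝ) y z)
    rwa [Set.preimage_univ] at this
  have hd : HasDerivAt (f ∘ (AffineMap.lineMap y z : ℝ →ᵃ[ℝ] X)) ⟪g, z - y⟫ 0 := by
    have h1 : HasDerivAt (AffineMap.lineMap y z : ℝ →ᵃ[ℝ] X) (z - y) 0 :=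
      AffineMap.hasDerivAt_lineMap
    have h2 : HasFDerivAt f (InnerProductSpace.toDual ℝ X g) (AffineMap.lineMap y z (0 : ℝ)) := by
      simpa using hg.hasFDerivAt
    simpa using h2.comp_hasDerivAt (0 : ℝ) h1
  have h := hc.le_slope_of_hasDerivAt (Set.mem_univ 0) (Set.mem_univ 1) one_pos hd
  simp [slope_def_field] at h
  linarith

lemma continuous_of_convexOn_hasGradientAt
    {X : Type*} [NormedAddCommGroup X] [InnerProductSpace ℝ X] [CompleteSpace X]
    {f : X → ℝ} {f' : X → X} (hf : ConvexOn ℝ Set.univ f) (hf' : ∀ x, HasGradientAt f (f' x) x) :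
    Continuous f' := by
  rw [Metric.continuous_iff]
  intro x ε hε
  have ho := (hasGradientAt_iff_isLittleO.1 (hf' x)).bound (show 0 < ε / 4 by positivity)
  obtain ⟨r, hr, hball⟩ := Metric.eventually_nhds_iff.1 ho
  refine ⟨r / 4, by positivity, fun y hy => ?_⟩
  rw [dist_eq_norm] at hy ⊢
  by_contra! hcon
  set u := f' y - f' x with hu
  have hupos : 0 < ‖u‖ := hε.trans_le hcon
  -- Move from `y` by `r / 2` in the direction in which the two slopes differ most.
  set h : X := (r / 2 / ‖u‖) • u with hh
  have hnorm : ‖h‖ = r / 2 := by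
    rw [hh, norm_smul, Real.norm_of_nonneg (by positivity)]
    field_simp
  have huh : ⟪u, h⟫ = r / 2 * ‖u‖ := by
    rw [hh, inner_smul_right, real_inner_self_eq_norm_sq]
    field_simp
  have hdist : ‖y + h - x‖ ≤ r / 4 + r / 2 := by
    calc ‖y + h - x‖ = ‖(y - x) + h‖ := by congr 1; abel
      _ ≤ ‖y - x‖ + ‖h‖ := norm_add_le _ _
      _ ≤ _ := by linarith
  have h1 := hball (y := y + h) (by rw [dist_eq_norm]; linarith)
  have h2 := add_inner_gradient_le_of_convexOn hf (hf' x) y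
  have h3 := add_inner_gradient_le_of_convexOn hf (hf' y) (y + h)
  have h4 := (le_abs_self _).trans h1
  have h5 : ⟪f' x, y + h - x⟫ = ⟪f' x, y - x⟫ + ⟪f' x, h⟫ := by
    rw [← inner_add_right]; congr 1; abel
  have h6 : ⟪u, h⟫ = ⟪f' y, h⟫ - ⟪f' x, h⟫ := inner_sub_left _ _ _
  rw [add_sub_cancel_left] at h3
  have h7 : ε / 4 * ‖y + h - x‖ ≤ ε / 4 * (r / 4 + r / 2) := by gcongr
  have h8 : r / 2 * ε ≤ r / 2 * ‖u‖ := by gcongr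
  have h9 : 0 < ε * r := by positivity
  linarith

/-- For every nonempty closed convex set `S ⊆ X`, the Bregman projector
`P : X → X` (mapping each `x` to its Bregman projection onto `S`) is continuous. -/
theorem bregman_projector_continuous
    {X : Type*} [NormedAddCommGroup X] [InnerProductSpace ℝ X] [FiniteDimensional ℝ X]
    (f : X → ℝ) (f' : X → X)
    (hf : StrictConvexOn ℝ Set.univ f)
    (hf' : ∀ x, HasGradientAt f (f' x) x)
    (D : X → X → ℝ)
    (hD : ∀ x y, D x y = f x - f y - ⟪f' y, x - y⟫)
    (S : Set X) (hSne : S.Nonempty) (hScl : IsClosed S) (hScv : Convex ℝ S)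
    (P : X → X)
    (hP : ∀ x, P x ∈ S ∧ ∀ c ∈ S, D (P x) x ≤ D c x) :
    Continuous P := by
  have hgrad : Continuous f' := continuous_of_convexOn_hasGradientAt hf.convexOn hf'
  have hfc : Continuous f := continuous_iff_continuousAt.2 fun x => (hf' x).continuousAt
  have hmin : ∀ x, ∀ c ∈ S, f (P x) - ⟪f' x, P x⟫ ≤ f c - ⟪f' x, c⟫ := by
    intro x c hc
    have := (hP x).2 c hc
    simp only [hD, inner_sub_right] at this
    linarith
  have hsc : ∀ v : X, StrictConvexOn ℝ Set.univ (fun c => f c - ⟪v, c⟫) := by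
    intro v
    refine hf.sub_concaveOn ⟨convex_univ, ?_⟩
    intro a _ b _ s t _ _ _
    simp [inner_add_right, inner_smul_right]
  rw [Metric.continuous_iff']
  intro x r hr
  set p := P x with hp
  have hpS : p ∈ S := (hP x).1
  have hstrict : ∀ c ∈ S, c ≠ p → f p - ⟪f' x, p⟫ < f c - ⟪f' x, c⟫ := by
    intro c hc hcp
    refine lt_of_le_of_ne (hmin x c hc) fun heq => hcp ?_
    refine ((hsc (f' x)).subset (Set.subset_univ S) hScv).eq_of_isMinOn ?_ ?_ hc hpS
    · intro d hd
      have := hmin x d hd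
      change f c - ⟪f' x, c⟫ ≤ f d - ⟪f' x, d⟫
      linarith
    · exact hmin x
  obtain ⟨δ, hδ, hgap⟩ : ∃ δ > 0, ∀ c ∈ S ∩ Metric.sphere p r,
      f p - ⟪f' x, p⟫ + δ ≤ f c - ⟪f' x, c⟫ := by
    have hK : IsCompact (S ∩ Metric.sphere p r) := (isCompact_sphere p r).inter_left hScl
    rcases (S ∩ Metric.sphere p r).eq_empty_or_nonempty with hE | hE
    · exact ⟨1, one_pos, by simp [hE]⟩
    · obtain ⟨m, hm, hmm⟩ := hK.exists_isMinOn hE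
        (f := fun c => f c - ⟪f' x, c⟫) (by fun_prop)
      have hmp := hstrict m hm.1 (Metric.ne_of_mem_sphere hm.2 hr.ne')
      refine ⟨_, sub_pos.2 hmp, fun c hc => ?_⟩
      have : f m - ⟪f' x, m⟫ ≤ f c - ⟪f' x, c⟫ := hmm hc
      linarith
  have hev : ∀ᶠ y in 𝓝 x, ‖f' x - f' y‖ * r < δ := by
    have : Tendsto (fun y => ‖f' x - f' y‖ * r) (𝓝 x) (𝓝 (‖f' x - f' x‖ * r)) :=
      Continuous.tendsto (by fun_prop) x
    exact this.eventually_lt_const (by simpa using hδ)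
  filter_upwards [hev] with y hy
  by_contra! hcon
  have hL : 0 < dist (P y) p := hr.trans_le hcon
  -- The point where the segment from `p` to `P y` crosses the sphere.
  set t : ℝ := r / dist (P y) p with ht
  have ht0 : 0 ≤ t := by positivity
  have ht1 : t ≤ 1 := (div_le_one hL).2 hcon
  set c : X := (1 - t) • p + t • P y with hc
  have hcp : c - p = t • (P y - p) := by rw [hc]; module
  have hcn : ‖c - p‖ = r := by
    rw [hcp, norm_smul, Real.norm_of_nonneg ht0, ← dist_eq_norm, ht, div_mul_cancel₀ _ hL.ne']
  have hcS : c ∈ S := hScv hpS (hP y).1 (by linarith) ht0 (by ring)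
  have h1 := hgap c ⟨hcS, by simpa [dist_eq_norm] using hcn⟩
  have h2 : f c - ⟪f' y, c⟫ ≤ f p - ⟪f' y, p⟫ := by
    refine ((hsc (f' y)).convexOn.2 (Set.mem_univ p) (Set.mem_univ (P y))
      (sub_nonneg.2 ht1) ht0 (by ring)).trans ?_
    have := mul_le_mul_of_nonneg_left (hmin y p hpS) ht0
    simp only [smul_eq_mul]
    linarith
  have h3 : ⟪f' x - f' y, p - c⟫ ≤ ‖f' x - f' y‖ * r := by
    rw [← hcn, norm_sub_rev c p]
    exact real_inner_le_norm _ _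
  simp only [inner_sub_left, inner_sub_right] at h3
  linarith
end

section
/- Let (xₙ)ₙ∈ℕ be a sequence in X and let (yₙ)ₙ∈ℕ be a bounded sequence in X such that D(xₙ, yₙ) → 0. Then xₙ − yₙ → 0. -/
open scoped RealInnerProductSpace
open Filter Topology

/-!
The Bregman distance admits a uniform lower bound away from the diagonal: for a bounded set of
base points `y` and `ε > 0` there is `δ > 0` with `δ ≤ D(x, y)` whenever `ε ≤ ‖x - y‖`.

Since `D(·, y)` is convex and vanishes at `y`, it suffices to bound it at `y + u` with `‖u‖ = ε`.
There the gradient inequality at the midpoint `y + u / 2` eliminates `∇f(y)` and yields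
`D(y + u, y) ≥ f (y + u) + f y - 2 f (y + u / 2)`. The right-hand side is a continuous function of
`(y, u)`, positive by strict convexity (`midpoint_gap_pos`), so it has a positive minimum on the
compact set `closedBall 0 R ×ˢ sphere 0 ε` (`exists_pos_le_midpoint_gap`). Working with this gap
instead of `D` itself avoids the continuity of `∇f`.
-/

section

variable {X : Type*} [NormedAddCommGroup X] [InnerProductSpace ℝ X]

/-- The gradient inequality of a convex function, obtained by restricting to a line. -/
theorem ConvexOn.inner_gradient_le_sub [CompleteSpace X] {f : X → ℝ}
    (hf : ConvexOn ℝ Set.univ f) {g y : X} (hg : HasGradientAt f g y) (h : X) :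
    ⟪g, h⟫ ≤ f (y + h) - f y := by
  have hconv : ConvexOn ℝ Set.univ (fun t : ℝ => f (y + t • h)) := by
    have := hf.comp_affineMap (AffineMap.lineMap y (y + h) : ℝ →ᵃ[ℝ] X)
    simpa [Function.comp_def, AffineMap.lineMap_apply, add_comm] using this
  have hline : HasDerivAt (fun t : ℝ => y + t • h) h 0 := by
    simpa using ((hasDerivAt_id (0 : ℝ)).smul_const h).const_add y
  have hderiv : HasDerivAt (fun t : ℝ => f (y + t • h)) ⟪g, h⟫ 0 := by
    have hg' : HasFDerivAt f (InnerProductSpace.toDual ℝ X g) (y + (0 : ℝ) • h) := by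
      simpa using hg.hasFDerivAt
    simpa [Function.comp_def] using hg'.comp_hasDerivAt (0 : ℝ) hline
  simpa [slope_def_field] using
    hconv.le_slope_of_hasDerivAt (Set.mem_univ 0) (Set.mem_univ 1) one_pos hderiv

theorem midpoint_gap_pos {f : X → ℝ} (hf : StrictConvexOn ℝ Set.univ f) (y : X) {u : X}
    (hu : u ≠ 0) : 0 < f (y + u) + f y - 2 * f (y + (1 / 2 : ℝ) • u) := by
  have h := hf.2 (Set.mem_univ (y + u)) (Set.mem_univ y) (by simpa using hu)
    (one_half_pos (α := ℝ)) one_half_pos (add_halves 1)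
  have e : (1 / 2 : ℝ) • (y + u) + (1 / 2 : ℝ) • y = y + (1 / 2 : ℝ) • u := by module
  rw [e] at h
  simp only [smul_eq_mul] at h
  linarith

theorem exists_pos_le_midpoint_gap [FiniteDimensional ℝ X] {f : X → ℝ}
    (hf : StrictConvexOn ℝ Set.univ f) (hc : Continuous f) (R : ℝ) {ε : ℝ} (hε : 0 < ε) :
    ∃ δ > 0, ∀ y u : X, ‖y‖ ≤ R → ‖u‖ = ε →
      δ ≤ f (y + u) + f y - 2 * f (y + (1 / 2 : ℝ) • u) := by
  have : ProperSpace X := FiniteDimensional.proper ℝ X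
  have hK : IsCompact (Metric.closedBall (0 : X) R ×ˢ Metric.sphere (0 : X) ε) :=
    (isCompact_closedBall _ _).prod (isCompact_sphere _ _)
  have hφ : Continuous
      (fun p : X × X => f (p.1 + p.2) + f p.1 - 2 * f (p.1 + (1 / 2 : ℝ) • p.2)) := by fun_prop
  obtain ⟨δ, hδ, h⟩ := hK.exists_forall_le' hφ.continuousOn (a := 0) (fun p hp => by
    have hn : ‖p.2‖ = ε := by simpa using hp.2
    exact midpoint_gap_pos hf p.1 (norm_pos_iff.1 (hn ▸ hε)))
  exact ⟨δ, hδ, fun y u hy hu => h (y, u) (by simp [hy, hu])⟩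

/-- Away from the diagonal the Bregman distance dominates the midpoint gap at distance `ε`: the
point `y + u` lies on the segment from `y` to `x`, where `D(·, y)` is at most `D(x, y)`. -/
theorem exists_midpoint_gap_le_bregman [CompleteSpace X] {f : X → ℝ}
    (hf : ConvexOn ℝ Set.univ f) {g x y : X} (hg : HasGradientAt f g y) {ε : ℝ} (hε : 0 < ε)
    (hxy : ε ≤ ‖x - y‖) :
    ∃ u : X, ‖u‖ = ε ∧
      f (y + u) + f y - 2 * f (y + (1 / 2 : ℝ) • u) ≤ f x - f y - ⟪g, x - y⟫ := by
  have hpos : 0 < ‖x - y‖ := hε.trans_le hxy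
  set t := ε / ‖x - y‖ with ht
  have ht0 : 0 < t := div_pos hε hpos
  have ht1 : t ≤ 1 := (div_le_one hpos).2 hxy
  refine ⟨t • (x - y), ?_, ?_⟩
  · rw [norm_smul, Real.norm_of_nonneg ht0.le, ht, div_mul_cancel₀ _ hpos.ne']
  have hmid := hf.inner_gradient_le_sub hg ((1 / 2 : ℝ) • t • (x - y))
  have hnonneg := hf.inner_gradient_le_sub hg (x - y)
  have hseg := hf.2 (Set.mem_univ x) (Set.mem_univ y) ht0.le (sub_nonneg.2 ht1) (by ring)
  have e : t • x + (1 - t) • y = y + t • (x - y) := by module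
  rw [e] at hseg
  simp only [smul_eq_mul, inner_smul_right, add_sub_cancel] at hmid hnonneg hseg
  nlinarith [mul_nonneg (sub_nonneg.2 ht1) (sub_nonneg.2 hnonneg)]

end

/-- Let `(xₙ)` be a sequence in `X` and `(yₙ)` a bounded sequence in `X`
such that `D(xₙ, yₙ) → 0`. Then `xₙ − yₙ → 0`. -/
theorem bregman_distance_to_zero_implies_diff_to_zero
    {X : Type*} [NormedAddCommGroup X] [InnerProductSpace ℝ X] [FiniteDimensional ℝ X]
    (f : X → ℝ) (f' : X → X)
    (hf : StrictConvexOn ℝ Set.univ f)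
    (hf' : ∀ x, HasGradientAt f (f' x) x)
    (D : X → X → ℝ)
    (hD : ∀ x y, D x y = f x - f y - ⟪f' y, x - y⟫)
    (x y : ℕ → X)
    (hybdd : Bornology.IsBounded (Set.range y))
    (hDxy : Tendsto (fun n => D (x n) (y n)) atTop (𝓝 0)) :
    Tendsto (fun n => x n - y n) atTop (𝓝 0) := by
  have hc : Continuous f := continuous_iff_continuousAt.2 fun x => (hf' x).continuousAt
  obtain ⟨R, hR⟩ := hybdd.exists_norm_le
  rw [NormedAddGroup.tendsto_nhds_zero]
  intro ε hε
  obtain ⟨δ, hδ, hgap⟩ := exists_pos_le_midpoint_gap hf hc R hε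
  filter_upwards [hDxy.eventually_lt_const hδ] with n hn
  by_contra! hfar
  obtain ⟨u, hu, hle⟩ := exists_midpoint_gap_le_bregman hf.convexOn (hf' (y n)) hε hfar
  rw [← hD] at hle
  exact (((hgap (y n) u (hR _ ⟨n, rfl⟩) hu).trans hle).trans_lt hn).false
end

section
/- Let (xₙ)ₙ∈ℕ be a sequence in X. Then the following are equivalent: (i) (xₙ) is bounded; (ii) for every y ∈ X the real sequence (D(xₙ, y))ₙ∈ℕ is bounded; (iii) there exists y ∈ X such that (D(xₙ, y))ₙ∈ℕ is bounded. -/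
open scoped RealInnerProductSpace
open Filter Topology

/-!
A bounded sequence stays in a compact ball, on which the continuous function `D(·, y)` is bounded.
Conversely, `D(·, y)` is convex, vanishes at `y` and, by strict convexity of `f`, is positive
elsewhere (`bregman_pos`). By compactness it is at least some `m > 0` on the unit sphere around
`y`; convexity along rays from `y` then gives `D(x, y) ≥ m ‖x - y‖` whenever `1 ≤ ‖x - y‖`, so
`D(·, y)` has bounded sublevel sets (`bregman_linear_growth`).
-/

section Aux

variable {X : Type*} [NormedAddCommGroup X] [InnerProductSpace ℝ X] [FiniteDimensional ℝ X]
  {f : X → ℝ} {v y : X}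

/-- The tangent inequality for a convex function. -/
lemma bregman_nonneg (hf : ConvexOn ℝ Set.univ f) (hv : HasGradientAt f v y) (x : X) :
    0 ≤ f x - f y - ⟪v, x - y⟫ := by
  -- The restriction of `f` to the line through `y` and `x` has slope at least its derivative at 0.
  have hφ : ConvexOn ℝ Set.univ (f ∘ AffineMap.lineMap (k := ℝ) y x) := by
    simpa using hf.comp_affineMap (AffineMap.lineMap (k := ℝ) y x)
  have hd : HasDerivAt (f ∘ AffineMap.lineMap (k := ℝ) y x) ⟪v, x - y⟫ 0 := by
    have h1 : HasDerivAt (AffineMap.lineMap (k := ℝ) y x) (x - y) (0 : ℝ) :=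
      AffineMap.hasDerivAt_lineMap
    have h2 : HasFDerivAt f (InnerProductSpace.toDual ℝ X v)
        (AffineMap.lineMap (k := ℝ) y x 0) := by
      simpa using hv.hasFDerivAt
    simpa using h2.comp_hasDerivAt (0 : ℝ) h1
  have h := hφ.le_slope_of_hasDerivAt (Set.mem_univ 0) (Set.mem_univ 1) one_pos hd
  simp [slope_def_field] at h
  linarith

lemma bregman_pos (hf : StrictConvexOn ℝ Set.univ f) (hv : HasGradientAt f v y) {x : X}
    (hxy : x ≠ y) : 0 < f x - f y - ⟪v, x - y⟫ := by
  -- At the midpoint the distance is nonnegative and less than half of its value at `x`.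
  have h0 := bregman_nonneg hf.convexOn hv ((1 / 2 : ℝ) • x + (1 / 2 : ℝ) • y)
  have h1 := hf.2 (Set.mem_univ x) (Set.mem_univ y) hxy (by norm_num : (0 : ℝ) < 1 / 2)
    (by norm_num : (0 : ℝ) < 1 / 2) (by norm_num)
  have h2 : (1 / 2 : ℝ) • x + (1 / 2 : ℝ) • y - y = (1 / 2 : ℝ) • (x - y) := by module
  rw [h2, inner_smul_right] at h0
  simp only [smul_eq_mul] at h1
  linarith

lemma bregman_linear_growth (hf : StrictConvexOn ℝ Set.univ f) (hc : Continuous f)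
    (hv : HasGradientAt f v y) :
    ∃ m > 0, ∀ x, 1 ≤ ‖x - y‖ → m * ‖x - y‖ ≤ f x - f y - ⟪v, x - y⟫ := by
  obtain ⟨m, hm, hmin⟩ := (isCompact_sphere y 1).exists_forall_le'
    (f := fun x => f x - f y - ⟪v, x - y⟫) (a := 0) (by fun_prop)
    (fun x hx => bregman_pos hf hv (by rintro rfl; simp at hx))
  refine ⟨m, hm, fun x hx => ?_⟩
  set r := ‖x - y‖
  have hr : 0 < r := by linarith
  -- Compare with the point where the segment from `y` to `x` crosses the unit sphere.
  have h2 : r⁻¹ • x + (1 - r⁻¹) • y - y = r⁻¹ • (x - y) := by module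
  have h0 := hmin (r⁻¹ • x + (1 - r⁻¹) • y) (by
    rw [mem_sphere_iff_norm, h2, norm_smul, norm_inv, Real.norm_of_nonneg hr.le]
    exact inv_mul_cancel₀ hr.ne')
  have h1 := hf.convexOn.2 (Set.mem_univ x) (Set.mem_univ y) (inv_nonneg.2 hr.le)
    (sub_nonneg.2 (inv_le_one_of_one_le₀ hx)) (by ring)
  simp only [h2, inner_smul_right] at h0
  simp only [smul_eq_mul] at h1
  have h3 : m ≤ r⁻¹ * (f x - f y - ⟪v, x - y⟫) := by linarith
  rwa [inv_mul_eq_div, le_div_iff₀ hr] at h3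

end Aux

/-- For a sequence `(xₙ)` in `X`, the following are equivalent:
(i) `(xₙ)` is bounded; (ii) for every `y ∈ X` the sequence `(D(xₙ, y))ₙ` is bounded;
(iii) there exists `y ∈ X` such that `(D(xₙ, y))ₙ` is bounded. -/
theorem bregman_boundedness_tfae
    {X : Type*} [NormedAddCommGroup X] [InnerProductSpace ℝ X] [FiniteDimensional ℝ X]
    (f : X → ℝ) (f' : X → X)
    (hf : StrictConvexOn ℝ Set.univ f)
    (hf' : ∀ x, HasGradientAt f (f' x) x)
    (D : X → X → ℝ)
    (hD : ∀ x y, D x y = f x - f y - ⟪f' y, x - y⟫)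
    (x : ℕ → X) :
    [Bornology.IsBounded (Set.range x),
     ∀ y : X, Bornology.IsBounded (Set.range fun n => D (x n) y),
     ∃ y : X, Bornology.IsBounded (Set.range fun n => D (x n) y)].TFAE := by
  have hc : Continuous f :=
    continuous_iff_continuousAt.2 fun x => (hf' x).hasFDerivAt.continuousAt
  tfae_have 1 → 2 := by
    intro hb y
    have hDc : Continuous fun z => D z y := by
      simp only [hD]
      fun_prop
    refine (hb.isCompact_closure.image hDc).isBounded.subset ?_
    rintro _ ⟨n, rfl⟩
    exact ⟨x n, subset_closure ⟨n, rfl⟩, rfl⟩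
  tfae_have 2 → 3 := fun h => ⟨0, h 0⟩
  tfae_have 3 → 1 := by
    rintro ⟨y, hy⟩
    obtain ⟨m, hm, hgrow⟩ := bregman_linear_growth hf hc (hf' y)
    obtain ⟨C, hC⟩ := hy.exists_norm_le
    refine (Metric.isBounded_closedBall (x := y) (r := max 1 (C / m))).subset ?_
    rintro _ ⟨n, rfl⟩
    rw [mem_closedBall_iff_norm]
    rcases le_total ‖x n - y‖ 1 with h | h
    · exact h.trans (le_max_left _ _)
    · refine le_trans ?_ (le_max_right _ _)
      have h1 := hgrow _ h
      rw [← hD] at h1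
      rw [le_div_iff₀ hm, mul_comm]
      exact h1.trans ((le_abs_self _).trans (hC _ ⟨n, rfl⟩))
  tfae_finish
end

section
/- Let (xₙ) be generated by the Algorithm. Then for every k ∈ ℕ, the partial sum ∑_{n=0}^{k} D(x_{n+1}, xₙ) is at most D(x_{k+1}, x₀) = D(P_{C_{k+1}}(x₀), x₀). -/
/-! The sets `C n` are convex, because in `D z (y n) ≤ D z (x n)` the term `f z` cancels and leaves a
condition affine in `z`. Minimality of `p = P_S(a)` over a convex set `S` then gives the variational
inequality `⟪∇f p - ∇f a, c - p⟫ ≥ 0` for `c ∈ S`, which by the three-point identity is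
`D(c,p) + D(p,a) ≤ D(c,a)`. With `S = C (n+1)`, `p = x (n+1)`, `a = x 0` and
`c = x (n+2) ∈ C (n+2) ⊆ C (n+1)`, this is the inductive step for the partial sums. -/

open scoped RealInnerProductSpace
open Filter Topology

/-- The Bregman Pythagorean inequality for the minimizer `p` of `D(·,a)` over a convex set,
where `D(u,v) = f u - f v - ⟪∇f v, u - v⟫`. -/
lemma bregman_pythagoras
    {X : Type*} [NormedAddCommGroup X] [InnerProductSpace ℝ X] [CompleteSpace X]
    {f : X → ℝ} {f' : X → X} (hf' : ∀ x, HasGradientAt f (f' x) x)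
    {D : X → X → ℝ} (hD : ∀ x y, D x y = f x - f y - ⟪f' y, x - y⟫)
    {S : Set X} (hS : Convex ℝ S) {a p c : X} (hp : p ∈ S) (hc : c ∈ S)
    (hmin : ∀ z ∈ S, D p a ≤ D z a) :
    D c p + D p a ≤ D c a := by
  have hder : HasFDerivAt (fun z => D z a) (innerSL ℝ (f' p) - innerSL ℝ (f' a)) p := by
    have h1 : HasFDerivAt f (innerSL ℝ (f' p)) p := (hf' p).hasFDerivAt
    have h2 : HasFDerivAt (fun z => ⟪f' a, z - a⟫) (innerSL ℝ (f' a)) p :=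
      (innerSL ℝ (f' a)).hasFDerivAt.comp p ((hasFDerivAt_id p).sub_const a)
    simp only [hD]
    exact (h1.sub_const (f a)).sub h2
  have hloc : IsLocalMinOn (fun z => D z a) S p := IsMinOn.localize (fun z hz => hmin z hz)
  have hvar := hloc.hasFDerivWithinAt_nonneg hder.hasFDerivWithinAt
    (sub_mem_posTangentConeAt_of_segment_subset (hS.segment_subset hp hc))
  simp only [sub_apply, innerSL_apply_apply] at hvar
  have hsplit : ⟪f' a, c - a⟫ = ⟪f' a, c - p⟫ + ⟪f' a, p - a⟫ := by
    rw [← inner_add_right, sub_add_sub_cancel]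
  rw [hD, hD, hD, hsplit]
  linarith

lemma convex_bregman_halfspace
    {X : Type*} [NormedAddCommGroup X] [InnerProductSpace ℝ X]
    {f : X → ℝ} {f' : X → X}
    {D : X → X → ℝ} (hD : ∀ x y, D x y = f x - f y - ⟪f' y, x - y⟫) (u v : X) :
    Convex ℝ {z | D z v ≤ D z u} := by
  have heq : {z | D z v ≤ D z u} =
      {z | (innerSL ℝ (f' u - f' v)) z ≤ f v - f u + ⟪f' u, u⟫ - ⟪f' v, v⟫} := by
    ext z
    simp only [Set.mem_ofPred_eq, hD, innerSL_apply_apply, inner_sub_right, inner_sub_left]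
    constructor <;> intro h <;> linarith
  rw [heq]
  exact convex_halfSpace_le (innerSL ℝ (f' u - f' v)).toLinearMap.isLinear _

/-- For the sequence generated by the Algorithm,
`∑_{n=0}^{k} D(x_{n+1},xₙ) ≤ D(x_{k+1},x₀)` for every `k`. -/
theorem algorithm_partial_sum_bound
    {X : Type*} [NormedAddCommGroup X] [InnerProductSpace ℝ X] [FiniteDimensional ℝ X]
    (f : X → ℝ) (f' : X → X)
    (hf : StrictConvexOn ℝ Set.univ f)
    (hf' : ∀ x, HasGradientAt f (f' x) x)
    (D : X → X → ℝ)
    (hD : ∀ x y, D x y = f x - f y - ⟪f' y, x - y⟫)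
    (x y : ℕ → X) (C : ℕ → Set X)
    (hC0cl : IsClosed (C 0)) (hC0cv : Convex ℝ (C 0))
    (hCne : ∀ n, (C n).Nonempty)
    (hCrec : ∀ n, C (n + 1) = C n ∩ {z | D z (y n) ≤ D z (x n)})
    (hxproj : ∀ n, x (n + 1) ∈ C (n + 1) ∧ ∀ c ∈ C (n + 1), D (x (n + 1)) (x 0) ≤ D c (x 0)) :
    ∀ k : ℕ, ∑ n ∈ Finset.range (k + 1), D (x (n + 1)) (x n) ≤ D (x (k + 1)) (x 0) := by
  have hconv : ∀ n, Convex ℝ (C n) := by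
    intro n
    induction n with
    | zero => exact hC0cv
    | succ n ih =>
      rw [hCrec]
      exact ih.inter (convex_bregman_halfspace hD _ _)
  intro k
  induction k with
  | zero => simp
  | succ k ih =>
    rw [Finset.sum_range_succ]
    have hmem : x (k + 1 + 1) ∈ C (k + 1) := by
      have h := (hxproj (k + 1)).1
      rw [hCrec (k + 1)] at h
      exact h.1
    have h := bregman_pythagoras hf' hD (hconv (k + 1)) (hxproj k).1 hmem (hxproj k).2
    linarith
end

section
/- Let (xₙ) be generated by the Algorithm. Then: (a) for all integers m, n with 1 ≤ m < n, ⟨∇f(x₀) − ∇f(x_m), x_n − x_m⟩ ≤ 0; and (b) for all integers m, n with 0 ≤ m < n, D(x_n, y_m) ≤ D(x_n, x_m). -/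
/-!
The difference `D z y - D z x` is affine in `z`, because the terms `f z` cancel. So each
`H(x, y)` is a half-space or trivial, and every `C n` is convex. The `C n` are nested, hence for
`1 ≤ m < n` the point `x n` lies in `C m`, on which `x m` minimizes `D · (x 0)`; since this
function has gradient `f' (x m) - f' (x 0)` at `x m`, (a) is the first-order optimality condition.
Part (b) is the membership `x n ∈ C (m + 1) ⊆ H(x m, y m)`.
-/


open scoped RealInnerProductSpace
open Filter Topology

/-- For the sequence generated by the Algorithm:
(a) for all `1 ≤ m < n`, `⟪∇f(x₀) − ∇f(x_m), x_n − x_m⟫ ≤ 0`; and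
(b) for all `0 ≤ m < n`, `D(x_n, y_m) ≤ D(x_n, x_m)`. -/
theorem algorithm_variational_inequalities
    {X : Type*} [NormedAddCommGroup X] [InnerProductSpace ℝ X] [FiniteDimensional ℝ X]
    (f : X → ℝ) (f' : X → X)
    (hf : StrictConvexOn ℝ Set.univ f)
    (hf' : ∀ x, HasGradientAt f (f' x) x)
    (D : X → X → ℝ)
    (hD : ∀ x y, D x y = f x - f y - ⟪f' y, x - y⟫)
    (x y : ℕ → X) (C : ℕ → Set X)
    (hC0cl : IsClosed (C 0)) (hC0cv : Convex ℝ (C 0))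
    (hCne : ∀ n, (C n).Nonempty)
    (hCrec : ∀ n, C (n + 1) = C n ∩ {z | D z (y n) ≤ D z (x n)})
    (hxproj : ∀ n, x (n + 1) ∈ C (n + 1) ∧ ∀ c ∈ C (n + 1), D (x (n + 1)) (x 0) ≤ D c (x 0)) :
    (∀ m n : ℕ, 1 ≤ m → m < n → ⟪f' (x 0) - f' (x m), x n - x m⟫ ≤ 0) ∧
      (∀ m n : ℕ, m < n → D (x n) (y m) ≤ D (x n) (x m)) := by
  have hanti : Antitone C := antitone_nat_of_succ_le fun n => by
    rw [hCrec]
    exact Set.inter_subset_left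
  have hmem : ∀ m n : ℕ, 1 ≤ n → m ≤ n → x n ∈ C m := by
    intro m n hn hmn
    obtain ⟨k, rfl⟩ := Nat.exists_eq_add_of_le' hn
    exact hanti hmn (hxproj k).1
  have hconv : ∀ n, Convex ℝ (C n) := by
    intro n
    induction n with
    | zero => exact hC0cv
    | succ n ih =>
      rw [hCrec]
      refine ih.inter ?_
      -- The terms `f z` cancel, leaving a linear inequality in `z`.
      have hset : {z | D z (y n) ≤ D z (x n)} =
          {z | innerSL ℝ (f' (x n) - f' (y n)) z ≤
            f (y n) - f (x n) + ⟪f' (x n), x n⟫ - ⟪f' (y n), y n⟫} := by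
        ext z
        simp only [Set.mem_setOf_eq, hD, innerSL_apply_apply, inner_sub_left, inner_sub_right]
        constructor <;> intro h <;> linarith
      rw [hset]
      exact convex_halfSpace_le (innerSL ℝ (f' (x n) - f' (y n))).toLinearMap.isLinear _
  refine ⟨fun m n hm hmn => ?_, fun m n hmn => ?_⟩
  · obtain ⟨k, rfl⟩ := Nat.exists_eq_add_of_le' hm
    have hmin : IsLocalMinOn (fun z => D z (x 0)) (C (k + 1)) (x (k + 1)) :=
      IsMinOn.localize fun c hc => (hxproj k).2 c hc
    have hder : HasFDerivAt (fun z => D z (x 0))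
        (InnerProductSpace.toDual ℝ X (f' (x (k + 1))) - innerSL ℝ (f' (x 0))) (x (k + 1)) := by
      simp only [hD]
      exact ((hf' (x (k + 1))).hasFDerivAt.sub_const _).sub
        ((innerSL ℝ (f' (x 0))).hasFDerivAt.comp (x (k + 1))
          ((hasFDerivAt_id (x (k + 1))).sub_const (x 0)))
    have hseg : segment ℝ (x (k + 1)) (x n) ⊆ C (k + 1) :=
      (hconv _).segment_subset (hxproj k).1 (hmem _ _ (by omega) hmn.le)
    have h := hmin.hasFDerivWithinAt_nonneg hder.hasFDerivWithinAt
      (sub_mem_posTangentConeAt_of_segment_subset hseg)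
    simp only [ContinuousLinearMap.sub_apply, InnerProductSpace.toDual_apply_apply,
      innerSL_apply_apply] at h
    rw [inner_sub_left]
    linarith
  · have h := hmem (m + 1) n (by omega) hmn
    rw [hCrec] at h
    exact h.2
end

section
/- Let C ⊆ X be closed and convex, let (xₙ) be generated by the Algorithm, and suppose that for every subsequence (x_{kₙ}) of (xₙ): if x_{kₙ} → x̄ and x_{kₙ} − y_{kₙ} → 0, then x̄ ∈ C. Then every bounded subsequence of (xₙ) converges to a point of C (in particular, if some subsequence of (xₙ) is bounded, then that subsequence converges and its limit lies in C). -/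
/-!
Every `Cn n` is closed and convex, because `{z | D z (y n) ≤ D z (x n)}` is a closed half-space:
`f z` cancels from the inequality. The first-order optimality condition for `x m = P_{Cn m}(x 0)`
therefore gives `D c (x m) + D (x m) (x 0) ≤ D c (x 0)` for all `c ∈ Cn m`
(`bregman_projection_ineq`). In particular `D (x m) (x 0)` is nondecreasing for `m ≥ 1`.

Let `p` be a cluster point of the bounded subsequence. As the sets are closed and nested, `p` lies
in each of them, and the monotone sequence `D (x m) (x 0)` has a subsequence tending to
`D p (x 0)`, hence tends to it. So `D p (x m) → 0`, and `D p (y m) ≤ D p (x m)` tends to `0` too.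
By boundedness of the level sets and strict convexity (`tendsto_of_bregman_tendsto_zero`), both
`x m → p` and `y m → p` along the full sequences, and the hypothesis on subsequences, applied to
the whole sequence, yields `p ∈ C`.
-/

open scoped RealInnerProductSpace
open Filter Topology

open Set in
/-- The gradient inequality, i.e. nonnegativity of the Bregman distance. -/
lemma gradient_ineq {X : Type*} [NormedAddCommGroup X] [InnerProductSpace ℝ X]
    [CompleteSpace X] {f : X → ℝ} (hf : ConvexOn ℝ univ f) {v b : X}
    (hv : HasGradientAt f v b) (a : X) : f b + ⟪v, a - b⟫ ≤ f a := by
  have hline : HasDerivAt (fun t : ℝ => AffineMap.lineMap b a t) (a - b) 0 :=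
    AffineMap.hasDerivAt_lineMap
  have hg : HasDerivAt (fun t : ℝ => f (AffineMap.lineMap b a t)) ⟪v, a - b⟫ 0 := by
    have h0 : HasFDerivAt f (InnerProductSpace.toDual ℝ X v)
        (AffineMap.lineMap b a (0 : ℝ)) := by
      simpa using hv.hasFDerivAt
    simpa [Function.comp_def] using h0.comp_hasDerivAt (0 : ℝ) hline
  have hc : ConvexOn ℝ univ (fun t : ℝ => f (AffineMap.lineMap b a t)) :=
    hf.comp_affineMap (AffineMap.lineMap b a : ℝ →ᵃ[ℝ] X)
  have h := hc.le_slope_of_hasDerivAt (mem_univ 0) (mem_univ 1) one_pos hg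
  simp [slope_def_field] at h
  linarith

/-- The Pythagorean-type inequality for Bregman projections. It needs no convexity of `f`: it is
the first-order condition `0 ≤ ⟪∇f p - ∇f b, c - p⟫` for `p` to minimize `D · b` on `S`,
where `w` stands for `∇f b`. -/
lemma bregman_projection_ineq {X : Type*} [NormedAddCommGroup X] [InnerProductSpace ℝ X]
    [CompleteSpace X] {f : X → ℝ} {v w b p c : X} {S : Set X}
    (hv : HasGradientAt f v p) (hS : Convex ℝ S) (hp : p ∈ S) (hc : c ∈ S)
    (hmin : ∀ z ∈ S, f p - f b - ⟪w, p - b⟫ ≤ f z - f b - ⟪w, z - b⟫) :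
    (f c - f p - ⟪v, c - p⟫) + (f p - f b - ⟪w, p - b⟫) ≤ f c - f b - ⟪w, c - b⟫ := by
  have hloc : IsLocalMinOn (fun z => f z - ⟪w, z⟫) S p := by
    refine IsMinOn.localize fun z hz => ?_
    have := hmin z hz
    simp only [inner_sub_right] at this
    show f p - ⟪w, p⟫ ≤ f z - ⟪w, z⟫
    linarith
  have hd : HasFDerivWithinAt (fun z => f z - ⟪w, z⟫)
      (InnerProductSpace.toDual ℝ X v - innerSL ℝ w) S p :=
    (hv.hasFDerivAt.sub (innerSL ℝ w).hasFDerivAt).hasFDerivWithinAt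
  have h := hloc.hasFDerivWithinAt_nonneg hd
    (sub_mem_posTangentConeAt_of_segment_subset (hS.segment_subset hp hc))
  simp only [sub_apply, InnerProductSpace.toDual_apply_apply,
    innerSL_apply_apply, inner_sub_right] at h
  simp only [inner_sub_right]
  linarith

/-- Convergence in Bregman distance implies convergence in norm. Continuity of the gradient is
not needed: convexity bounds the midpoint gap `(f p + f (u n)) / 2 - f ((p + u n) / 2)` by
`D p (u n) / 2`, so it vanishes at every cluster point of `u`, which by strict convexity is `p`. -/
lemma tendsto_of_bregman_tendsto_zero {X : Type*} [NormedAddCommGroup X]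
    [InnerProductSpace ℝ X] [FiniteDimensional ℝ X] {f : X → ℝ} {f' : X → X}
    (hf : StrictConvexOn ℝ Set.univ f) (hf' : ∀ x, HasGradientAt f (f' x) x) {p : X}
    (hlev : ∀ r : ℝ, Bornology.IsBounded {z | f p - f z - ⟪f' z, p - z⟫ ≤ r}) {u : ℕ → X}
    (hu : Tendsto (fun n => f p - f (u n) - ⟪f' (u n), p - u n⟫) atTop (𝓝 0)) :
    Tendsto u atTop (𝓝 p) := by
  have hfc : Continuous f := continuous_iff_continuousAt.2 fun z => (hf' z).continuousAt
  obtain ⟨M, hM⟩ := hu.bddAbove_range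
  have hub : ∀ n, u n ∈ {z | f p - f z - ⟪f' z, p - z⟫ ≤ M} := fun n =>
    hM (Set.mem_range_self n)
  refine tendsto_of_subseq_tendsto fun ns hns => ?_
  obtain ⟨q, -, φ, hφ, hq⟩ := tendsto_subseq_of_bounded (hlev M) (fun n => hub (ns n))
  have hgap : ∀ n, 2⁻¹ * f p + 2⁻¹ * f (u n) - f ((2⁻¹ : ℝ) • p + (2⁻¹ : ℝ) • u n)
      ≤ 2⁻¹ * (f p - f (u n) - ⟪f' (u n), p - u n⟫) := by
    intro n
    have h := gradient_ineq hf.convexOn (hf' (u n)) ((2⁻¹ : ℝ) • p + (2⁻¹ : ℝ) • u n)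
    have e : (2⁻¹ : ℝ) • p + (2⁻¹ : ℝ) • u n - u n = (2⁻¹ : ℝ) • (p - u n) := by module
    rw [e, real_inner_smul_right] at h
    linarith
  have hψ : Tendsto (fun n => ns (φ n)) atTop atTop := hns.comp hφ.tendsto_atTop
  have hlim : Tendsto (fun n => 2⁻¹ * f p + 2⁻¹ * f (u (ns (φ n)))
      - f ((2⁻¹ : ℝ) • p + (2⁻¹ : ℝ) • u (ns (φ n)))) atTop
      (𝓝 (2⁻¹ * f p + 2⁻¹ * f q - f ((2⁻¹ : ℝ) • p + (2⁻¹ : ℝ) • q))) := by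
    have hcont : Continuous fun z : X =>
        2⁻¹ * f p + 2⁻¹ * f z - f ((2⁻¹ : ℝ) • p + (2⁻¹ : ℝ) • z) := by fun_prop
    exact (hcont.tendsto q).comp hq
  have hle := le_of_tendsto_of_tendsto' hlim ((hu.comp hψ).const_mul 2⁻¹)
    fun n => hgap (ns (φ n))
  have hpq : p = q := by
    by_contra hne
    have h := hf.2 (Set.mem_univ p) (Set.mem_univ q) hne
      (by norm_num : (0 : ℝ) < 2⁻¹) (by norm_num : (0 : ℝ) < 2⁻¹) (by norm_num)
    simp only [smul_eq_mul] at h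
    linarith
  exact ⟨φ, hpq ▸ hq⟩

/-- Let `C` be closed and convex and suppose that every subsequence of
`(xₙ)` converging to some `x̄` with `x_{kₙ} − y_{kₙ} → 0` has `x̄ ∈ C`.  Then every
bounded subsequence of `(xₙ)` converges to a point of `C`. -/
theorem algorithm_bounded_subsequences_converge
    {X : Type*} [NormedAddCommGroup X] [InnerProductSpace ℝ X] [FiniteDimensional ℝ X]
    (f : X → ℝ) (f' : X → X)
    (hf : StrictConvexOn ℝ Set.univ f)
    (hf' : ∀ x, HasGradientAt f (f' x) x)
    (D : X → X → ℝ)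
    (hD : ∀ x y, D x y = f x - f y - ⟪f' y, x - y⟫)
    (x y : ℕ → X) (Cn : ℕ → Set X)
    (hC0cl : IsClosed (Cn 0)) (hC0cv : Convex ℝ (Cn 0))
    (hCne : ∀ n, (Cn n).Nonempty)
    (hCrec : ∀ n, Cn (n + 1) = Cn n ∩ {z | D z (y n) ≤ D z (x n)})
    (hxproj : ∀ n, x (n + 1) ∈ Cn (n + 1) ∧ ∀ c ∈ Cn (n + 1), D (x (n + 1)) (x 0) ≤ D c (x 0))
    (hlevbdd : ∀ (w : X) (r : ℝ), Bornology.IsBounded {z | D w z ≤ r})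
    (C : Set X) (hCcl : IsClosed C) (hCcv : Convex ℝ C)
    (hsub : ∀ k : ℕ → ℕ, StrictMono k → ∀ xbar : X,
      Tendsto (fun n => x (k n)) atTop (𝓝 xbar) →
      Tendsto (fun n => x (k n) - y (k n)) atTop (𝓝 0) → xbar ∈ C) :
    ∀ k : ℕ → ℕ, StrictMono k → Bornology.IsBounded (Set.range fun n => x (k n)) →
      ∃ xbar ∈ C, Tendsto (fun n => x (k n)) atTop (𝓝 xbar) := by
  obtain rfl : D = fun x y => f x - f y - ⟪f' y, x - y⟫ := by
    funext a b
    exact hD a b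
  clear hD
  beta_reduce at hCrec hxproj hlevbdd
  intro k hk hkb
  have hfc : Continuous f := continuous_iff_continuousAt.2 fun z => (hf' z).continuousAt
  have hH : ∀ n, {z | f z - f (y n) - ⟪f' (y n), z - y n⟫ ≤ f z - f (x n) - ⟪f' (x n), z - x n⟫}
      = {z | innerSL ℝ (f' (x n) - f' (y n)) z
          ≤ f (y n) - f (x n) + ⟪f' (x n), x n⟫ - ⟪f' (y n), y n⟫} := by
    intro n
    ext z
    simp only [Set.mem_ofPred_eq, innerSL_apply_apply, inner_sub_left, inner_sub_right]
    constructor <;> intro h <;> linarith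
  have hcl : ∀ n, IsClosed (Cn n) := by
    intro n
    induction n with
    | zero => exact hC0cl
    | succ n ih =>
      rw [hCrec, hH]
      exact ih.inter (isClosed_le (ContinuousLinearMap.continuous _) continuous_const)
  have hcv : ∀ n, Convex ℝ (Cn n) := by
    intro n
    induction n with
    | zero => exact hC0cv
    | succ n ih =>
      rw [hCrec, hH]
      exact ih.inter (convex_halfSpace_le (LinearMap.isLinear
        (innerSL ℝ (f' (x n) - f' (y n))).toLinearMap) _)
  have hanti : Antitone Cn := antitone_nat_of_succ_le fun n => by
    rw [hCrec]
    exact Set.inter_subset_left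
  obtain ⟨p, -, φ, hφ, hp⟩ := tendsto_subseq_of_bounded hkb (fun n => Set.mem_range_self n)
  have hψ : StrictMono fun n => k (φ n) := hk.comp hφ
  have hpC : ∀ n, p ∈ Cn n := by
    intro n
    refine (hcl n).mem_of_tendsto hp ?_
    filter_upwards [hψ.tendsto_atTop.eventually_ge_atTop (n + 1)] with j hj
    obtain ⟨i, hi⟩ : ∃ i, k (φ j) = i + 1 := ⟨k (φ j) - 1, by omega⟩
    show x (k (φ j)) ∈ Cn n
    rw [hi]
    exact hanti (by omega) (hxproj i).1
  -- `x 0` need not lie in `Cn 0`, so monotonicity only starts at index `1`.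
  have hmono : Monotone fun n => f (x (n + 1)) - f (x 0) - ⟪f' (x 0), x (n + 1) - x 0⟫ :=
    monotone_nat_of_le_succ fun n =>
      (hxproj n).2 _ (hanti (Nat.le_succ _) (hxproj (n + 1)).1)
  have hlim : Tendsto (fun n => f (x (n + 1)) - f (x 0) - ⟪f' (x 0), x (n + 1) - x 0⟫) atTop
      (𝓝 (f p - f (x 0) - ⟪f' (x 0), p - x 0⟫)) := by
    have hsh : Tendsto (fun j => k (φ j) - 1) atTop atTop :=
      (tendsto_sub_atTop_nat 1).comp hψ.tendsto_atTop
    rw [tendsto_iff_tendsto_subseq_of_monotone hmono hsh]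
    have hcont : Continuous fun z => f z - f (x 0) - ⟪f' (x 0), z - x 0⟫ := by fun_prop
    refine ((hcont.tendsto p).comp hp).congr' ?_
    filter_upwards [hψ.tendsto_atTop.eventually_ge_atTop 1] with j hj
    simp only [Function.comp_apply, Nat.sub_add_cancel hj]
  have hnn : ∀ z, 0 ≤ f p - f z - ⟪f' z, p - z⟫ := fun z => by
    linarith [gradient_ineq hf.convexOn (hf' z) p]
  have hDx : Tendsto (fun n => f p - f (x (n + 1)) - ⟪f' (x (n + 1)), p - x (n + 1)⟫) atTop
      (𝓝 0) := by
    have h0 := hlim.const_sub (f p - f (x 0) - ⟪f' (x 0), p - x 0⟫)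
    rw [sub_self] at h0
    refine squeeze_zero (fun n => hnn _) (fun n => ?_) h0
    have := bregman_projection_ineq (hf' (x (n + 1))) (hcv (n + 1)) (hxproj n).1 (hpC (n + 1))
      (hxproj n).2
    linarith
  have hDy : Tendsto (fun n => f p - f (y (n + 1)) - ⟪f' (y (n + 1)), p - y (n + 1)⟫) atTop
      (𝓝 0) := by
    refine squeeze_zero (fun n => hnn _) (fun n => ?_) hDx
    have h := hpC (n + 1 + 1)
    rw [hCrec] at h
    exact h.2
  have hx : Tendsto x atTop (𝓝 p) :=
    (tendsto_add_atTop_iff_nat 1).1 (tendsto_of_bregman_tendsto_zero hf hf' (hlevbdd p) hDx)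
  have hy : Tendsto y atTop (𝓝 p) :=
    (tendsto_add_atTop_iff_nat 1).1 (tendsto_of_bregman_tendsto_zero hf hf' (hlevbdd p) hDy)
  refine ⟨p, hsub id strictMono_id p hx ?_, hx.comp hk.tendsto_atTop⟩
  simpa using hx.sub hy
end

section
/- Let E ⊆ X be nonempty, closed and convex, and let T : E → X be quasi Bregman nonexpansive. Then the fixed point set Fix T = {x ∈ E : Tx = x} is closed and convex. -/
/-!
The Bregman distance separates points: along the segment from `y` to `x` the strictly convex
function `f` lies strictly above its tangent at `y`, so `D x y ≤ 0` forces `x = y`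
(`StrictConvexOn.add_inner_lt_of_hasGradientAt`). Hence a point `x ∈ E` is fixed as soon as
`D x (T x) ≤ D x x = 0`, and it suffices to pass the inequality `D p (T x) ≤ D p x` from fixed
points `p` to `p = x`. For fixed second arguments both sides are continuous in `p`, which gives
closedness; and `D p u - D p v` is affine in `p`, which gives convexity.
-/

open scoped RealInnerProductSpace
open Filter Topology

/-- A strictly convex function lies strictly above its tangent planes. -/
theorem StrictConvexOn.add_inner_lt_of_hasGradientAt
    {X : Type*} [NormedAddCommGroup X] [InnerProductSpace ℝ X] [CompleteSpace X]
    {f : X → ℝ} (hf : StrictConvexOn ℝ Set.univ f) {x y g : X}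
    (hg : HasGradientAt f g y) (hxy : x ≠ y) :
    f y + ⟪g, x - y⟫ < f x := by
  have hc : StrictConvexOn ℝ Set.univ (fun t : ℝ => f (y + t • (x - y))) := by
    refine ⟨convex_univ, fun s _ t _ hst a b ha hb hab => ?_⟩
    have hne : y + s • (x - y) ≠ y + t • (x - y) := fun h =>
      hst (smul_left_injective ℝ (sub_ne_zero.2 hxy) (add_left_cancel h))
    have h := hf.2 (Set.mem_univ _) (Set.mem_univ _) hne ha hb hab
    have e : a • (y + s • (x - y)) + b • (y + t • (x - y))
        = y + (a • s + b • t) • (x - y) := by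
      obtain rfl : b = 1 - a := by linarith
      simp only [smul_eq_mul]
      module
    rwa [e] at h
  have hd : HasDerivAt (fun t : ℝ => f (y + t • (x - y))) ⟪g, x - y⟫ 0 := by
    have hl : HasDerivAt (fun t : ℝ => y + t • (x - y)) (x - y) 0 := by
      simpa using ((hasDerivAt_id (0 : ℝ)).smul_const (x - y)).const_add y
    have hF : HasFDerivAt f (InnerProductSpace.toDual ℝ X g) (y + (0 : ℝ) • (x - y)) := by
      simpa using hg.hasFDerivAt
    have h := hF.comp_hasDerivAt (0 : ℝ) hl
    rw [InnerProductSpace.toDual_apply_apply] at h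
    exact h
  have h := hc.lt_slope_of_hasDerivAt (Set.mem_univ 0) (Set.mem_univ 1) zero_lt_one hd
  simp [slope_def_field] at h
  linarith

/-- Let `E ⊆ X` be nonempty, closed and convex and let `T : E → X` be
quasi Bregman nonexpansive.  Then `Fix T = {x ∈ E : Tx = x}` is closed and convex. -/
theorem fixed_point_set_closed_convex
    {X : Type*} [NormedAddCommGroup X] [InnerProductSpace ℝ X] [FiniteDimensional ℝ X]
    (f : X → ℝ) (f' : X → X)
    (hf : StrictConvexOn ℝ Set.univ f)
    (hf' : ∀ x, HasGradientAt f (f' x) x)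
    (D : X → X → ℝ)
    (hD : ∀ x y, D x y = f x - f y - ⟪f' y, x - y⟫)
    (E : Set X) (hEne : E.Nonempty) (hEcl : IsClosed E) (hEcv : Convex ℝ E)
    (T : X → X)
    (hQBNE : ∀ p ∈ {z ∈ E | T z = z}, ∀ y ∈ E, D p (T y) ≤ D p y) :
    IsClosed {z ∈ E | T z = z} ∧ Convex ℝ {z ∈ E | T z = z} := by
  have hfix : ∀ x, D x (T x) ≤ D x x → T x = x := by
    intro x hx
    by_contra hne
    have h := hf.add_inner_lt_of_hasGradientAt (hf' (T x)) (Ne.symm hne)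
    simp only [hD, sub_self, inner_zero_right] at hx
    linarith
  have hfc : Continuous f :=
    continuous_iff_continuousAt.2 fun x => (hf' x).hasFDerivAt.continuousAt
  have hDc : ∀ u, Continuous fun p => D p u := by
    intro u
    simp only [hD]
    fun_prop
  constructor
  · refine isClosed_of_closure_subset fun x hx => ?_
    have hxE : x ∈ E := closure_minimal (fun z hz => hz.1) hEcl hx
    have hcl : IsClosed {p | D p (T x) ≤ D p x} := isClosed_le (hDc _) (hDc _)
    exact ⟨hxE, hfix x (closure_minimal (fun p hp => hQBNE p hp x hxE) hcl hx)⟩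
  · intro x hx y hy a b ha hb hab
    have hzE : a • x + b • y ∈ E := hEcv hx.1 hy.1 ha hb hab
    refine ⟨hzE, hfix _ ?_⟩
    have h1 := mul_le_mul_of_nonneg_left (hQBNE x hx _ hzE) ha
    have h2 := mul_le_mul_of_nonneg_left (hQBNE y hy _ hzE) hb
    -- The error of affinity of `D · u` is independent of `u`.
    have key : ∀ u, D (a • x + b • y) u
        = a * D x u + b * D y u + (f (a • x + b • y) - a * f x - b * f y) := by
      intro u
      obtain rfl : b = 1 - a := by linarith
      simp only [hD, inner_sub_right, inner_add_right, inner_smul_right]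
      ring
    rw [key, key]
    linarith
end

section
/- Let x₀ ∈ X and let C₀ be a closed convex subset of X with lev_{≤0} g ⊆ C₀. Define recursively C_{n+1} := Cₙ ∩ H(xₙ, Q_s(xₙ)) and x_{n+1} := P_{C_{n+1}}(x₀) (with xₙ = P_{Cₙ}(x₀) for n ≥ 1). Then the sequence (xₙ) is well defined, xₙ converges to the Bregman projection P_{lev_{≤0} g}(x₀), and ∑_{n=0}^{∞} D(x_{n+1}, xₙ) < +∞. -/
open scoped RealInnerProductSpace
open Filter Topology

/-!
Every `c` in the level set satisfies the subgradient inequality at `xₙ`, hence lies in the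
half-space onto which `Q` projects `xₙ`, so that `D(c, Q xₙ) ≤ D(c, xₙ)`; thus all `Cₙ` contain
the level set. The Bregman projection inequality `D(c, P_S a) + D(P_S a, a) ≤ D(c, a)`
(`proj_ineq`) then gives two things. Taking `c = x_{n+2}`, `S = C_{n+1}` makes
`∑ D(x_{n+1}, xₙ)` telescope to at most `D(c, x₀)`; taking `c` in the level set bounds `D(c, xₙ)`
and `D(c, Q xₙ)`, so `(xₙ)` and `(Q xₙ)` are bounded by the assumption on `D(c, ·)`.

Since `x_{n+1} ∈ H(xₙ, Q xₙ)`, both `D(x_{n+1}, xₙ)` and `D(x_{n+1}, Q xₙ)` tend to `0`. By strict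
convexity this forces `xₙ - Q xₙ → 0` (`tendsto_sub_of_breg`): subgradients are bounded on bounded
sets (`bounded_subgrad`), so limits may be taken along subsequences without knowing that the
gradient is continuous. As `g(xₙ) ≤ ‖s(xₙ)‖ ‖Q xₙ - xₙ‖`, every cluster point of `(xₙ)` lies in
the level set and is there a minimiser of `D(·, x₀)`. Such a minimiser is unique, and a bounded
sequence with a single cluster point converges.
-/

/-- The Bregman distance of `f`, with the gradient `f'` of `f` given as a separate function. -/
def breg {X : Type*} [NormedAddCommGroup X] [InnerProductSpace ℝ X]
    (f : X → ℝ) (f' : X → X) (x y : X) : ℝ := f x - f y - ⟪f' y, x - y⟫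

section

variable {X : Type*} [NormedAddCommGroup X] [InnerProductSpace ℝ X]

lemma comb_le {a b r α β : ℝ} (ha : a ≤ r) (hb : b ≤ r) (hα : 0 ≤ α) (hβ : 0 ≤ β)
    (h : α + β = 1) : α * a + β * b ≤ r := by
  have h1 := mul_le_mul_of_nonneg_left ha hα
  have h2 := mul_le_mul_of_nonneg_left hb hβ
  have h3 : α * r + β * r = r := by rw [← add_mul, h, one_mul]
  linarith

lemma deriv_nonneg_of_min {φ : ℝ → ℝ} {d : ℝ} (h : HasDerivAt φ d 0)
    (hm : ∀ t, 0 < t → t < 1 → φ 0 ≤ φ t) : 0 ≤ d := by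
  have h1 := h.tendsto_slope_zero_right
  refine ge_of_tendsto h1 ?_
  filter_upwards [Ioo_mem_nhdsGT (zero_lt_one' ℝ)] with t ht
  have h2 := hm t ht.1 ht.2
  rw [zero_add, smul_eq_mul]
  exact mul_nonneg (inv_nonneg.2 ht.1.le) (sub_nonneg.2 h2)

lemma breg_three (f : X → ℝ) (f' : X → X) (a b c : X) :
    breg f f' c a = breg f f' c b + breg f f' b a + ⟪f' b - f' a, c - b⟫ := by
  simp only [breg, inner_sub_left, inner_sub_right]
  ring

/-- A strictly convex `f` meets an affine minorant touching it at `v` nowhere else. -/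
lemma eq_of_affine {f : X → ℝ} (hf : StrictConvexOn ℝ Set.univ f) {u v ξ : X}
    (hξ : ∀ w, f v + ⟪ξ, w - v⟫ ≤ f w) (h : f u - f v - ⟪ξ, u - v⟫ ≤ 0) : u = v := by
  by_contra hne
  have h1 := hf.2 (Set.mem_univ u) (Set.mem_univ v) hne (by norm_num : (0 : ℝ) < 1 / 2)
    (by norm_num : (0 : ℝ) < 1 / 2) (by norm_num)
  have h2 := hξ ((1 / 2 : ℝ) • u + (1 / 2 : ℝ) • v)
  have h3 : (1 / 2 : ℝ) • u + (1 / 2 : ℝ) • v - v = (1 / 2 : ℝ) • (u - v) := by module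
  rw [h3, inner_smul_right] at h2
  simp only [smul_eq_mul] at h1
  linarith

lemma breg_halfspace_convex (f : X → ℝ) (f' : X → X) (a b : X) :
    Convex ℝ {z | breg f f' z b ≤ breg f f' z a} := by
  intro u hu v hv α β hα hβ hαβ
  -- The term `f z` cancels, so the condition is affine in `z`.
  have key : ∀ z, breg f f' z b ≤ breg f f' z a ↔
      ⟪f' a - f' b, z⟫ ≤ f b - f a + ⟪f' a, a⟫ - ⟪f' b, b⟫ := by
    intro z
    simp only [breg, inner_sub_left, inner_sub_right]
    constructor <;> intro h <;> linarith
  simp only [Set.mem_ofPred_eq, key] at hu hv ⊢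
  rw [inner_add_right, inner_smul_right, inner_smul_right]
  exact comb_le hu hv hα hβ hαβ

/-- Subgradients of a continuous function are bounded on bounded sets: test the
subgradient inequality one unit step in the direction of the subgradient. -/
lemma bounded_subgrad [FiniteDimensional ℝ X] {g : X → ℝ} (hg : Continuous g) {s : X → X}
    (hs : ∀ z w, g z + ⟪s z, w - z⟫ ≤ g w) {R : ℝ} :
    ∃ M, ∀ z, ‖z‖ ≤ R → ‖s z‖ ≤ M := by
  have : ProperSpace X := FiniteDimensional.proper ℝ X
  obtain ⟨K, hK⟩ := (isCompact_closedBall (0 : X) (R + 1)).exists_bound_of_continuousOn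
    hg.continuousOn
  refine ⟨K + K, fun z hz => ?_⟩
  have hz0 : ‖g z‖ ≤ K := hK z (by simpa using hz.trans (by linarith))
  by_cases h0 : s z = 0
  · rw [h0, norm_zero]
    linarith [norm_nonneg (g z)]
  have hn : ‖s z‖ ≠ 0 := norm_ne_zero_iff.2 h0
  have h1 := hs z (z + ‖s z‖⁻¹ • s z)
  rw [add_sub_cancel_left, inner_smul_right, real_inner_self_eq_norm_sq] at h1
  have h2 : ‖s z‖⁻¹ * ‖s z‖ ^ 2 = ‖s z‖ := by field_simp
  have h3 : ‖g (z + ‖s z‖⁻¹ • s z)‖ ≤ K := by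
    apply hK
    rw [mem_closedBall_zero_iff]
    refine (norm_add_le _ _).trans ?_
    rw [norm_smul, norm_inv, norm_norm, inv_mul_cancel₀ hn]
    linarith
  rw [Real.norm_eq_abs] at hz0 h3
  linarith [abs_le.1 hz0, abs_le.1 h3]

/-- If `D(uₙ, vₙ) → 0` along bounded sequences, then `uₙ - vₙ → 0`. -/
lemma tendsto_sub_of_breg [FiniteDimensional ℝ X] {f : X → ℝ} {f' : X → X}
    (hfc : Continuous f) (hf : StrictConvexOn ℝ Set.univ f)
    (hsub : ∀ v w, f v + ⟪f' v, w - v⟫ ≤ f w)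
    {u v : ℕ → X} {R : ℝ} (hu : ∀ n, ‖u n‖ ≤ R) (hv : ∀ n, ‖v n‖ ≤ R)
    (h : Tendsto (fun n => breg f f' (u n) (v n)) atTop (𝓝 0)) :
    Tendsto (fun n => u n - v n) atTop (𝓝 0) := by
  have : ProperSpace X := FiniteDimensional.proper ℝ X
  obtain ⟨M, hM⟩ := bounded_subgrad hfc hsub (R := R)
  refine tendsto_of_subseq_tendsto fun ns hns => ?_
  have hmem : ∀ n, (u (ns n), v (ns n), f' (v (ns n))) ∈
      Metric.closedBall (0 : X) R ×ˢ (Metric.closedBall (0 : X) R ×ˢ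
        Metric.closedBall (0 : X) M) := by
    intro n
    simp only [Set.mem_prod, mem_closedBall_zero_iff]
    exact ⟨hu _, hv _, hM _ (hv _)⟩
  obtain ⟨⟨p, q, ξ⟩, -, ms, hmono, hlim⟩ := ((isCompact_closedBall (0 : X) R).prod
    ((isCompact_closedBall (0 : X) R).prod (isCompact_closedBall (0 : X) M))).tendsto_subseq hmem
  refine ⟨ms, ?_⟩
  have hms : Tendsto ms atTop atTop := hmono.tendsto_atTop
  have hp : Tendsto (fun n => u (ns (ms n))) atTop (𝓝 p) := hlim.fst_nhds
  have hq : Tendsto (fun n => v (ns (ms n))) atTop (𝓝 q) := hlim.snd_nhds.fst_nhds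
  have hξ : Tendsto (fun n => f' (v (ns (ms n)))) atTop (𝓝 ξ) := hlim.snd_nhds.snd_nhds
  have hfq := (hfc.tendsto q).comp hq
  have hfp := (hfc.tendsto p).comp hp
  have hmin : ∀ w, f q + ⟪ξ, w - q⟫ ≤ f w := fun w =>
    le_of_tendsto (hfq.add (hξ.inner (tendsto_const_nhds.sub hq)))
      (Eventually.of_forall fun n => hsub _ w)
  have hzero : f p - f q - ⟪ξ, p - q⟫ = 0 :=
    tendsto_nhds_unique ((hfp.sub hfq).sub (hξ.inner (hp.sub hq))) (h.comp (hns.comp hms))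
  have hpq : p = q := eq_of_affine hf hmin hzero.le
  have := hp.sub hq
  rwa [hpq, sub_self] at this

variable [CompleteSpace X]

lemma line_deriv {f : X → ℝ} {f' : X → X} (hf' : ∀ x, HasGradientAt f (f' x) x) (v d : X) :
    HasDerivAt (fun t : ℝ => f (v + t • d)) ⟪f' v, d⟫ 0 := by
  have h1 : HasDerivAt (fun t : ℝ => v + t • d) d 0 := by
    simpa using ((hasDerivAt_id (0 : ℝ)).smul_const d).const_add v
  have h2 : HasFDerivAt f (InnerProductSpace.toDual ℝ X (f' v)) (v + (0 : ℝ) • d) := by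
    simpa using (hf' v).hasFDerivAt
  simpa [Function.comp_def] using h2.comp_hasDerivAt (0 : ℝ) h1

lemma gradient_subgrad {f : X → ℝ} {f' : X → X} (hf : ConvexOn ℝ Set.univ f)
    (hf' : ∀ x, HasGradientAt f (f' x) x) (v w : X) : f v + ⟪f' v, w - v⟫ ≤ f w := by
  have h1 : HasDerivAt (fun t : ℝ => t * (f w - f v) - f (v + t • (w - v)))
      ((f w - f v) - ⟪f' v, w - v⟫) 0 := by
    simpa using ((hasDerivAt_id (0 : ℝ)).mul_const (f w - f v)).fun_sub (line_deriv hf' v (w - v))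
  have h2 := deriv_nonneg_of_min h1 (fun t ht ht1 => by
    have := hf.2 (Set.mem_univ v) (Set.mem_univ w) (by linarith : 0 ≤ 1 - t) ht.le
      (by ring)
    have e : (1 - t) • v + t • w = v + t • (w - v) := by module
    rw [e] at this
    simp only [smul_eq_mul] at this
    simp only [zero_mul, zero_smul, add_zero]
    linarith)
  linarith

/-- The Pythagorean-type inequality for the Bregman projection `p` of `a` onto a convex set. -/
lemma proj_ineq {f : X → ℝ} {f' : X → X} (hf' : ∀ x, HasGradientAt f (f' x) x)
    {S : Set X} (hS : Convex ℝ S) {p a c : X} (hp : p ∈ S)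
    (hmin : ∀ c ∈ S, breg f f' p a ≤ breg f f' c a) (hc : c ∈ S) :
    breg f f' c p + breg f f' p a ≤ breg f f' c a := by
  have h1 : HasDerivAt (fun t : ℝ => f (p + t • (c - p)) - t * ⟪f' a, c - p⟫)
      (⟪f' p, c - p⟫ - ⟪f' a, c - p⟫) 0 := by
    simpa using (line_deriv hf' p (c - p)).fun_sub
      ((hasDerivAt_id (0 : ℝ)).mul_const ⟪f' a, c - p⟫)
  have h2 := deriv_nonneg_of_min h1 (fun t ht ht1 => by
    have := hmin (p + t • (c - p)) (hS.add_smul_sub_mem hp hc ⟨ht.le, ht1.le⟩)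
    have e : p + t • (c - p) - a = (p - a) + t • (c - p) := by abel
    simp only [breg] at this
    rw [e, inner_add_right, inner_smul_right] at this
    simp only [zero_mul, zero_smul, add_zero]
    linarith)
  rw [breg_three f f' a p c, inner_sub_left]
  linarith

end

/-- Let `x₀ ∈ X` and `C₀` closed convex with `lev_{≤0} g ⊆ C₀`.  With
`C_{n+1} := Cₙ ∩ H(xₙ, Q_s(xₙ))` and `x_{n+1} := P_{C_{n+1}}(x₀)`, the sequence `(xₙ)` is
well defined, `xₙ → P_{lev_{≤0} g}(x₀)`, and `∑ₙ D(x_{n+1},xₙ) < +∞`. -/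
theorem bregman_subgradient_projector_algorithm_converges
    {X : Type*} [NormedAddCommGroup X] [InnerProductSpace ℝ X] [FiniteDimensional ℝ X]
    (f : X → ℝ) (f' : X → X)
    (hf : StrictConvexOn ℝ Set.univ f)
    (hf' : ∀ x, HasGradientAt f (f' x) x)
    (D : X → X → ℝ)
    (hD : ∀ x y, D x y = f x - f y - ⟪f' y, x - y⟫)
    (hlevbdd : ∀ (w : X) (r : ℝ), Bornology.IsBounded {z | D w z ≤ r})
    (g : X → ℝ) (hgcont : Continuous g) (hgcv : ConvexOn ℝ Set.univ g)
    (hlev : {x : X | g x ≤ 0}.Nonempty)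
    (s : X → X) (hs : ∀ z w, g z + ⟪s z, w - z⟫ ≤ g w)
    (Q : X → X)
    (hQ : ∀ z, Q z ∈ {x : X | g z + ⟪s z, x - z⟫ ≤ 0} ∧
      ∀ c ∈ {x : X | g z + ⟪s z, x - z⟫ ≤ 0}, D (Q z) z ≤ D c z)
    (x : ℕ → X) (Cn : ℕ → Set X)
    (hC0cl : IsClosed (Cn 0)) (hC0cv : Convex ℝ (Cn 0))
    (hC0lev : {x : X | g x ≤ 0} ⊆ Cn 0)
    (hCrec : ∀ n, Cn (n + 1) = Cn n ∩ {z | D z (Q (x n)) ≤ D z (x n)})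
    (hxproj : ∀ n, (Cn (n + 1)).Nonempty →
      x (n + 1) ∈ Cn (n + 1) ∧ ∀ c ∈ Cn (n + 1), D (x (n + 1)) (x 0) ≤ D c (x 0)) :
    (∀ n, (Cn n).Nonempty) ∧
      (∃ p, (p ∈ {x : X | g x ≤ 0} ∧ ∀ c ∈ {x : X | g x ≤ 0}, D p (x 0) ≤ D c (x 0)) ∧
        Tendsto x atTop (𝓝 p)) ∧
      Summable (fun n => D (x (n + 1)) (x n)) := by
  have : ProperSpace X := FiniteDimensional.proper ℝ X
  obtain rfl : D = breg f f' := by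
    funext u v
    exact hD u v
  have hfc : Continuous f := continuous_iff_continuousAt.2 fun z => (hf' z).continuousAt
  have hsub := gradient_subgrad hf.convexOn hf'
  have hnn : ∀ u v, 0 ≤ breg f f' u v := fun u v => by
    have := hsub v u
    simp only [breg]
    linarith
  have hLcv : Convex ℝ {x : X | g x ≤ 0} := by
    simpa using hgcv.convex_le 0
  have hCcv : ∀ n, Convex ℝ (Cn n) := by
    intro n
    induction n with
    | zero => exact hC0cv
    | succ n ih =>
      rw [hCrec]
      exact ih.inter (breg_halfspace_convex f f' _ _)
  have hHcv : ∀ z, Convex ℝ {y : X | g z + ⟪s z, y - z⟫ ≤ 0} := by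
    intro z u hu v hv α β hα hβ hαβ
    simp only [Set.mem_ofPred_eq, inner_sub_right] at hu hv ⊢
    have hu' : ⟪s z, u⟫ ≤ ⟪s z, z⟫ - g z := by linarith
    have hv' : ⟪s z, v⟫ ≤ ⟪s z, z⟫ - g z := by linarith
    rw [inner_add_right, inner_smul_right, inner_smul_right]
    have := comb_le hu' hv' hα hβ hαβ
    linarith
  have hQle : ∀ z, ∀ c ∈ {x : X | g x ≤ 0}, breg f f' c (Q z) ≤ breg f f' c z := by
    intro z c hc
    have := proj_ineq hf' (hHcv z) (hQ z).1 (hQ z).2 (c := c) ((hs z c).trans hc)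
    linarith [hnn (Q z) z]
  have hLC : ∀ n, {x : X | g x ≤ 0} ⊆ Cn n := by
    intro n
    induction n with
    | zero => exact hC0lev
    | succ n ih =>
      rw [hCrec]
      exact fun c hc => ⟨ih hc, hQle _ c hc⟩
  have hne : ∀ n, (Cn n).Nonempty := fun n => hlev.mono (hLC n)
  have hx := fun n => hxproj n (hne (n + 1))
  obtain ⟨c₀, hc₀⟩ := hlev
  have hstep : ∀ n, breg f f' (x (n + 1)) (x n) ≤
      breg f f' (x (n + 1)) (x 0) - breg f f' (x n) (x 0) := by
    intro n
    cases n with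
    | zero => simp [breg]
    | succ n =>
      have hmem : x (n + 1 + 1) ∈ Cn (n + 1) := by
        have := (hx (n + 1)).1
        rw [hCrec] at this
        exact this.1
      linarith [proj_ineq hf' (hCcv (n + 1)) (hx n).1 (hx n).2 hmem]
  have hsum : Summable (fun n => breg f f' (x (n + 1)) (x n)) := by
    refine summable_of_sum_range_le (c := breg f f' c₀ (x 0)) (fun n => hnn _ _) fun n => ?_
    refine (Finset.sum_le_sum fun i _ => hstep i).trans ?_
    rw [Finset.sum_range_sub (fun n => breg f f' (x n) (x 0))]
    have h0 : breg f f' (x 0) (x 0) = 0 := by simp [breg]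
    rw [h0, sub_zero]
    cases n with
    | zero => exact h0.trans_le (hnn _ _)
    | succ n => exact (hx n).2 c₀ (hLC _ hc₀)
  refine ⟨hne, ?_, hsum⟩
  have hcx : ∀ n, breg f f' c₀ (x n) ≤ breg f f' c₀ (x 0) := by
    intro n
    cases n with
    | zero => exact le_rfl
    | succ n =>
      linarith [proj_ineq hf' (hCcv (n + 1)) (hx n).1 (hx n).2 (hLC _ hc₀), hnn (x (n + 1)) (x 0)]
  obtain ⟨R, hR⟩ := (hlevbdd c₀ (breg f f' c₀ (x 0))).exists_norm_le
  have hxR : ∀ n, ‖x n‖ ≤ R := fun n => hR _ (hcx n)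
  have hQR : ∀ n, ‖Q (x n)‖ ≤ R := fun n => hR _ ((hQle _ c₀ hc₀).trans (hcx n))
  have ht1 := hsum.tendsto_atTop_zero
  have ht2 : Tendsto (fun n => breg f f' (x (n + 1)) (Q (x n))) atTop (𝓝 0) := by
    refine squeeze_zero (fun n => hnn _ _) (fun n => ?_) ht1
    have := (hx n).1
    rw [hCrec] at this
    exact this.2
  have hd1 := tendsto_sub_of_breg hfc hf hsub (fun n => hxR (n + 1)) hxR ht1
  have hd2 := tendsto_sub_of_breg hfc hf hsub (fun n => hxR (n + 1)) hQR ht2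
  have hd : Tendsto (fun n => x n - Q (x n)) atTop (𝓝 0) := by
    simpa using hd2.sub hd1
  obtain ⟨M, hM⟩ := bounded_subgrad hgcont hs (R := R)
  have hgle : ∀ n, g (x n) ≤ M * ‖x n - Q (x n)‖ := by
    intro n
    have h1 : g (x n) + ⟪s (x n), Q (x n) - x n⟫ ≤ 0 := (hQ (x n)).1
    rw [← neg_sub, inner_neg_right] at h1
    have h2 := real_inner_le_norm (s (x n)) (x n - Q (x n))
    have h3 := mul_le_mul_of_nonneg_right (hM _ (hxR n)) (norm_nonneg (x n - Q (x n)))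
    linarith
  have hcluster : ∀ (q : X) (ns : ℕ → ℕ), Tendsto ns atTop atTop →
      Tendsto (fun n => x (ns n)) atTop (𝓝 q) →
      q ∈ {x : X | g x ≤ 0} ∧ ∀ c ∈ {x : X | g x ≤ 0}, breg f f' q (x 0) ≤ breg f f' c (x 0) := by
    intro q ns hns hq
    constructor
    · have h1 := ((hd.comp hns).norm).const_mul M
      rw [norm_zero, mul_zero] at h1
      exact le_of_tendsto_of_tendsto' ((hgcont.tendsto q).comp hq) h1 fun n => hgle _
    · intro c hc
      have hcont : Continuous fun z => breg f f' z (x 0) := by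
        unfold breg
        fun_prop
      refine le_of_tendsto ((hcont.tendsto q).comp hq) (Eventually.of_forall fun n => ?_)
      change breg f f' (x (ns n)) (x 0) ≤ _
      cases ns n with
      | zero => exact le_of_eq_of_le (by simp [breg]) (hnn _ _)
      | succ k => exact (hx k).2 c (hLC _ hc)
  have hball : ∀ n, x n ∈ Metric.closedBall (0 : X) R := fun n => by simpa using hxR n
  obtain ⟨p, -, ms, hms, hp⟩ := (isCompact_closedBall (0 : X) R).tendsto_subseq hball
  have hpm := hcluster p ms hms.tendsto_atTop hp
  refine ⟨p, hpm, tendsto_of_subseq_tendsto fun ns hns => ?_⟩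
  obtain ⟨q, -, ks, hks, hq⟩ := (isCompact_closedBall (0 : X) R).tendsto_subseq
    fun n => hball (ns n)
  have hqm := hcluster q (ns ∘ ks) (hns.comp hks.tendsto_atTop) hq
  have h1 := proj_ineq hf' hLcv hpm.1 hpm.2 hqm.1
  have h2 := hqm.2 p hpm.1
  have hqp : q = p := eq_of_affine hf (hsub p) (show breg f f' q p ≤ 0 by linarith)
  exact ⟨ks, hqp ▸ hq⟩
end

section
/- Let C ⊆ X be nonempty, closed and convex, let 1 ≤ p < +∞, and let g := (1/p) d_C^p, where d_C(x) := min_{c∈C} ‖x − c‖. Then g is convex, differentiable on X ∖ C with ∇g(x) = d_C(x)^{p−2} (x − P_C(x)) for x ∉ C, and the subgradient projector Q of g satisfies Q(x) = (1 − 1/p) x + (1/p) P_C(x) for every x ∈ X, where P_C denotes the metric (nearest-point) projection onto C. -/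
/-!
The gradient formula comes from the squared distance. Write `P` for the projection and `u = x - P x`.
Comparing `y` with the competitor `P x` from above, and using the variational inequality
`⟪u, P y - P x⟫ ≤ 0` from below, gives
`0 ≤ d(y)² - d(x)² - 2 ⟪u, y - x⟫ ≤ ‖y - x‖²`
(`sq_sub_bounds`), so `d²` has gradient `2 u` everywhere. Off `C` the distance is positive, and the
chain rule applied to `d ^ p = (d²) ^ (p / 2)` gives the gradient of `g`.
Convexity of `g` is convexity of `d` followed by the increasing convex map `t ↦ t ^ p` on `[0, ∞)`.
The formula for `Q` follows from uniqueness of the gradient and `‖u‖ = d(x)`, since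
`(1 / p) d ^ p · d ^ (p - 2) / (d ^ (p - 2) d)² = 1 / p`.
-/

open scoped RealInnerProductSpace
open Filter Topology

section Projection

lemma infDist_eq_norm_sub_proj {X : Type*} [NormedAddCommGroup X] {C : Set X} {x y : X}
    (hy : y ∈ C) (hmin : ∀ c ∈ C, dist x y ≤ dist x c) : Metric.infDist x C = ‖x - y‖ := by
  rw [← dist_eq_norm]
  exact le_antisymm (Metric.infDist_le_dist_of_mem hy)
    ((Metric.le_infDist ⟨y, hy⟩).2 fun {c} hc => hmin c hc)

variable {X : Type*} [NormedAddCommGroup X] [InnerProductSpace ℝ X]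

/-- Variational inequality: the vector from the nearest point `y` to `x` makes an obtuse angle with
every direction from `y` into the convex set. -/
lemma inner_sub_proj_nonpos {C : Set X} (hC : Convex ℝ C) {x y : X} (hy : y ∈ C)
    (hmin : ∀ c ∈ C, dist x y ≤ dist x c) {c : X} (hc : c ∈ C) : ⟪x - y, c - y⟫ ≤ 0 := by
  refine (norm_eq_iInf_iff_real_inner_le_zero hC hy).1 ?_ c hc
  have hne : Nonempty C := ⟨⟨y, hy⟩⟩
  refine le_antisymm (le_ciInf fun w => ?_) (ciInf_le ⟨0, ?_⟩ (⟨y, hy⟩ : C))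
  · simpa [dist_eq_norm] using hmin w w.2
  · rintro _ ⟨w, rfl⟩
    exact norm_nonneg _

/-- The squared distance to `C` agrees with its first-order expansion at `x` up to `‖y - x‖ ^ 2`;
here `a` and `b` are the nearest points of `C` to `x` and `y`. -/
lemma sq_sub_bounds {C : Set X} (hC : Convex ℝ C) {x y a b : X} (ha : a ∈ C)
    (hamin : ∀ c ∈ C, dist x a ≤ dist x c) (hb : b ∈ C)
    (hbmin : ∀ c ∈ C, dist y b ≤ dist y c) :
    0 ≤ ‖y - b‖ ^ 2 - ‖x - a‖ ^ 2 - 2 * ⟪x - a, y - x⟫ ∧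
      ‖y - b‖ ^ 2 - ‖x - a‖ ^ 2 - 2 * ⟪x - a, y - x⟫ ≤ ‖y - x‖ ^ 2 := by
  constructor
  · have h1 := inner_sub_proj_nonpos hC ha hamin hb
    have h2 : ‖y - b‖ ^ 2 = ‖x - a‖ ^ 2 + 2 * ⟪x - a, (y - b) - (x - a)⟫
        + ‖(y - b) - (x - a)‖ ^ 2 := by
      rw [← norm_add_sq_real]; congr 2; abel
    have h3 : ⟪x - a, (y - b) - (x - a)⟫ = ⟪x - a, y - x⟫ - ⟪x - a, b - a⟫ := by
      rw [← inner_sub_right]; congr 1; abel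
    nlinarith [sq_nonneg ‖(y - b) - (x - a)‖]
  · have h1 : ‖y - b‖ ^ 2 ≤ ‖y - a‖ ^ 2 := by
      have := hbmin a ha
      rw [dist_eq_norm, dist_eq_norm] at this
      gcongr
    have h2 : ‖y - a‖ ^ 2 = ‖x - a‖ ^ 2 + 2 * ⟪x - a, y - x⟫ + ‖y - x‖ ^ 2 := by
      rw [← norm_add_sq_real]; congr 2; abel
    linarith

lemma hasGradientAt_infDist_sq [CompleteSpace X] {C : Set X} (hC : Convex ℝ C) {P : X → X}
    (hP : ∀ x, P x ∈ C ∧ ∀ c ∈ C, dist x (P x) ≤ dist x c) (x : X) :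
    HasGradientAt (fun y => Metric.infDist y C ^ 2) ((2 : ℝ) • (x - P x)) x := by
  rw [hasGradientAt_iff_isLittleO]
  have hO : (fun y => Metric.infDist y C ^ 2 - Metric.infDist x C ^ 2
      - ⟪(2 : ℝ) • (x - P x), y - x⟫) =O[𝓝 x] fun y => ‖y - x‖ ^ 2 := by
    refine Asymptotics.IsBigO.of_bound 1 (Eventually.of_forall fun y => ?_)
    obtain ⟨h1, h2⟩ := sq_sub_bounds hC (hP x).1 (hP x).2 (hP y).1 (hP y).2
    rw [infDist_eq_norm_sub_proj (hP x).1 (hP x).2, infDist_eq_norm_sub_proj (hP y).1 (hP y).2,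
      real_inner_smul_left, Real.norm_of_nonneg h1, Real.norm_of_nonneg (by positivity), one_mul]
    exact h2
  exact hO.trans_isLittleO (Asymptotics.isLittleO_pow_sub_sub x one_lt_two)

lemma convexOn_infDist {C : Set X} (hC : Convex ℝ C) {P : X → X}
    (hP : ∀ x, P x ∈ C ∧ ∀ c ∈ C, dist x (P x) ≤ dist x c) :
    ConvexOn ℝ Set.univ fun x => Metric.infDist x C := by
  refine ⟨convex_univ, fun x _ y _ a b ha hb hab => ?_⟩
  have hmem : a • P x + b • P y ∈ C := hC (hP x).1 (hP y).1 ha hb hab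
  simp only [smul_eq_mul]
  rw [infDist_eq_norm_sub_proj (hP x).1 (hP x).2, infDist_eq_norm_sub_proj (hP y).1 (hP y).2]
  calc Metric.infDist (a • x + b • y) C
      ≤ ‖a • x + b • y - (a • P x + b • P y)‖ := by
        rw [← dist_eq_norm]; exact Metric.infDist_le_dist_of_mem hmem
    _ = ‖a • (x - P x) + b • (y - P y)‖ := by congr 1; module
    _ ≤ ‖a • (x - P x)‖ + ‖b • (y - P y)‖ := norm_add_le _ _
    _ = a * ‖x - P x‖ + b * ‖y - P y‖ := by
        rw [norm_smul, norm_smul, Real.norm_of_nonneg ha, Real.norm_of_nonneg hb]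

end Projection

/-- Let `C ⊆ X` be nonempty closed convex, `1 ≤ p < ∞`, and
`g := (1/p) d_C^p`.  Then `g` is convex, differentiable on `X ∖ C` with
`∇g(x) = d_C(x)^{p−2}(x − P_C(x))`, and the subgradient projector `Q` of `g` satisfies
`Q(x) = (1 − 1/p)x + (1/p)P_C(x)` for every `x`. -/
theorem subgradient_projector_of_distance_power
    {X : Type*} [NormedAddCommGroup X] [InnerProductSpace ℝ X] [FiniteDimensional ℝ X]
    (C : Set X) (hCne : C.Nonempty) (hCcl : IsClosed C) (hCcv : Convex ℝ C)
    (p : ℝ) (hp : 1 ≤ p)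
    (g : X → ℝ) (hg : ∀ x, g x = (1 / p) * Metric.infDist x C ^ p)
    (PC : X → X) (hPC : ∀ x, PC x ∈ C ∧ ∀ c ∈ C, dist x (PC x) ≤ dist x c)
    (g' : X → X) (hg' : ∀ x ∉ C, HasGradientAt g (g' x) x)
    (Q : X → X)
    (hQ : ∀ x, Q x = if g x ≤ 0 then x else x - (g x / ‖g' x‖ ^ 2) • g' x) :
    ConvexOn ℝ Set.univ g ∧
      (∀ x ∉ C, HasGradientAt g ((Metric.infDist x C ^ (p - 2)) • (x - PC x)) x) ∧
      (∀ x, Q x = (1 - 1 / p) • x + (1 / p) • PC x) := by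
  have hp0 : 0 < p := by linarith
  have hd : ∀ x, Metric.infDist x C = ‖x - PC x‖ := fun x =>
    infDist_eq_norm_sub_proj (hPC x).1 (hPC x).2
  have hpos : ∀ x ∉ C, 0 < Metric.infDist x C := fun x hx =>
    (hCcl.notMem_iff_infDist_pos hCne).1 hx
  have hgrad : ∀ x ∉ C,
      HasGradientAt g ((Metric.infDist x C ^ (p - 2)) • (x - PC x)) x := by
    intro x hx
    have hsq := (hasGradientAt_infDist_sq hCcv hPC x).hasFDerivAt
    have hxp := hpos x hx
    have h := (hsq.rpow_const (p := p / 2) (Or.inl (by positivity))).const_mul (1 / p)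
    have hsq_rpow : ∀ t q : ℝ, 0 ≤ t → (t ^ 2) ^ q = t ^ (2 * q) := fun t q ht => by
      rw [← Real.rpow_natCast, ← Real.rpow_mul ht]; norm_num
    rw [hasGradientAt_iff_hasFDerivAt]
    have hfun : g = fun y => 1 / p * (Metric.infDist y C ^ 2) ^ (p / 2) := by
      funext y
      rw [hg, hsq_rpow _ _ Metric.infDist_nonneg]
      congr 2; ring
    rw [hfun]
    refine h.congr_fderiv ?_
    rw [hsq_rpow _ _ hxp.le, show 2 * (p / 2 - 1) = p - 2 by ring]
    ext v
    simp
    field_simp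
  refine ⟨⟨convex_univ, fun x _ y _ a b ha hb hab => ?_⟩, hgrad, fun x => ?_⟩
  · have h1 := (convexOn_infDist hCcv hPC).2 (Set.mem_univ x) (Set.mem_univ y) ha hb hab
    have h2 := (convexOn_rpow hp).2 (Metric.infDist_nonneg (x := x) (s := C))
      (Metric.infDist_nonneg (x := y) (s := C)) ha hb hab
    have h3 := (Real.rpow_le_rpow Metric.infDist_nonneg h1 hp0.le).trans h2
    simp only [hg, smul_eq_mul] at h3 ⊢
    calc _ ≤ 1 / p * (a * Metric.infDist x C ^ p + b * Metric.infDist y C ^ p) := by gcongr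
      _ = _ := by ring
  · rw [hQ]
    by_cases hx : x ∈ C
    · have h0 : Metric.infDist x C = 0 := Metric.infDist_zero_of_mem hx
      have hPx : PC x = x := by
        have := hd x
        rw [h0, eq_comm, norm_eq_zero, sub_eq_zero] at this
        exact this.symm
      rw [if_pos (by rw [hg, h0, Real.zero_rpow hp0.ne', mul_zero]), hPx]
      module
    · have hxp := hpos x hx
      have hgx : 0 < g x := by rw [hg]; positivity
      rw [if_neg hgx.not_ge, (hg' x hx).unique (hgrad x hx), hg, norm_smul, ← hd x]
      have ha : 0 < Metric.infDist x C ^ (p - 2) := by positivity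
      have hpow : Metric.infDist x C ^ p
          = Metric.infDist x C ^ (p - 2) * Metric.infDist x C ^ 2 := by
        rw [← Real.rpow_natCast, ← Real.rpow_add hxp]; norm_num
      rw [Real.norm_of_nonneg ha.le, hpow, smul_smul]
      have hcoef : ∀ s d : ℝ, 0 < s → 0 < d →
          1 / p * (s * d ^ 2) / (s * d) ^ 2 * s = 1 / p := by
        intro s d hs hd
        field_simp
      rw [hcoef _ _ ha hxp]
      module
end

section
/- Let h : X → (−∞, +∞] be proper, lower semicontinuous and convex with {x : h(x) ≤ 0} ≠ ∅, let e_h(x) := inf_{w∈X} ( h(w) + ½‖w − x‖² ) be its Moreau envelope, and let P_h(x) := argmin_{w∈X} ( h(w) + ½‖w − x‖² ) be its proximal mapping. Then g := e_h is convex and continuously differentiable with ∇e_h = Id − P_h, the set {x : e_h(x) ≤ 0} is nonempty, and the subgradient projector Q of g satisfies: Q(x) = x if e_h(x) ≤ 0, and otherwise Q(x) = ((e_h(x) − 2h(P_h(x))) / (2(e_h(x) − h(P_h(x))))) · x + (e_h(x) / (2(e_h(x) − h(P_h(x))))) · P_h(x). -/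
open scoped RealInnerProductSpace
open Filter Topology

/-!
Write `u x = x - P x`. Minimality of `P x` along the segment from `P x` to `w`, together with
convexity of `h`, gives `h w ≥ h (P x) + ⟪u x, w - P x⟫` (`prox_variational`). Taking `w = P y`
and expanding squares yields the lower bound
`e y ≥ e x + ⟪u x, y - x⟫ + ½‖u y - u x‖²` (`envelope_lower`), while using `P x` as a competitor
in the problem defining `e y` yields the upper bound
`e y ≤ e x + ⟪u x, y - x⟫ + ½‖y - x‖²` (`envelope_upper`).

Everything follows from these two inequalities: `u x` is a subgradient of `e` at every `x`, so `e`
is convex; the first-order error is at most `½‖y - x‖²`, so `∇e = u`; and comparing the two bounds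
shows that `u = Id - P` is nonexpansive, hence continuous. Finally `‖u x‖² = 2 (e x - h (P x))`,
which is nonzero when `e x > 0`: otherwise `x` would minimise `e`, although `e` takes a value `≤ 0`.
The formula for `Q` is then algebra.
-/

section Envelope

variable {X : Type*} [NormedAddCommGroup X] [InnerProductSpace ℝ X]

/-- The first-order optimality condition of the proximal problem: `x - p` is a subgradient of `h`
at the proximal point `p` of `x`. -/
lemma prox_variational {h : X → EReal}
    (hconv : Convex ℝ {q : X × ℝ | h q.1 ≤ (q.2 : EReal)}) {x p w : X} {r c : ℝ}
    (hr : h p = (r : EReal)) (hc : h w = (c : EReal))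
    (hp : ∀ w : X, h p + ((1 / 2 * ‖p - x‖ ^ 2 : ℝ) : EReal)
        ≤ h w + ((1 / 2 * ‖w - x‖ ^ 2 : ℝ) : EReal)) :
    r + ⟪x - p, w - p⟫ ≤ c := by
  have key : ∀ t : ℝ, 0 < t → t ≤ 1 →
      0 ≤ (c - r - ⟪x - p, w - p⟫) + t * (1 / 2 * ‖w - p‖ ^ 2) := by
    intro t ht ht1
    have hmem := hconv (x := (p, r)) (by simp [hr]) (y := (w, c)) (by simp [hc])
      (a := 1 - t) (b := t) (by linarith) ht.le (by ring)
    have h1 : h ((1 - t) • p + t • w) ≤ (((1 - t) * r + t * c : ℝ) : EReal) := by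
      simpa using hmem
    have h2 := (hp ((1 - t) • p + t • w)).trans (add_le_add_left h1 _)
    rw [hr, ← EReal.coe_add, ← EReal.coe_add, EReal.coe_le_coe_iff] at h2
    have h3 : (1 - t) • p + t • w - x = t • (w - p) - (x - p) := by module
    rw [h3, norm_sub_sq_real (t • (w - p)), norm_sub_rev p x, inner_smul_left, norm_smul,
      real_inner_comm, mul_pow, Real.norm_eq_abs, sq_abs] at h2
    simp only [conj_trivial] at h2
    have h4 : 0 ≤ t * ((c - r - ⟪x - p, w - p⟫) + t * (1 / 2 * ‖w - p‖ ^ 2)) := by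
      nlinarith
    exact nonneg_of_mul_nonneg_right h4 ht
  by_contra hlt
  set d := c - r - ⟪x - p, w - p⟫ with hd
  set k := 1 / 2 * ‖w - p‖ ^ 2 with hk
  have hd0 : d < 0 := by linarith
  have hk0 : 0 ≤ k := by positivity
  have hkd : 0 < k - d := by linarith
  -- At this step size the quadratic bound equals `-d² / (k - d) < 0`.
  have h5 := key (-d / (k - d)) (div_pos (by linarith) hkd)
    ((div_le_one hkd).2 (by linarith))
  have h6 : d + -d / (k - d) * k = -(d ^ 2) / (k - d) := by
    field_simp
    ring
  rw [h6] at h5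
  have h7 : -(d ^ 2) / (k - d) < 0 := div_neg_of_neg_of_pos (by nlinarith) hkd
  linarith

/-- Adding the variational inequality to the identities `e = h ∘ P + ½‖P · - ·‖²` at `x` and `y`
gives the subgradient inequality for the envelope, with a quadratic gain. -/
lemma envelope_lower {x y p q : X} {r s : ℝ} (hv : r + ⟪x - p, q - p⟫ ≤ s) :
    r + 1 / 2 * ‖p - x‖ ^ 2 + ⟪x - p, y - x⟫ + 1 / 2 * ‖(y - q) - (x - p)‖ ^ 2
      ≤ s + 1 / 2 * ‖q - y‖ ^ 2 := by
  have h1 : q - p = (y - x) - ((y - q) - (x - p)) := by abel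
  rw [h1, inner_sub_right (x - p) (y - x), inner_sub_right (x - p) (y - q),
    real_inner_self_eq_norm_sq] at hv
  rw [norm_sub_sq_real (y - q), norm_sub_rev p x, norm_sub_rev q y,
    real_inner_comm (x - p) (y - q)]
  linarith

/-- The proximal point `p` of `x`, used as a competitor at `y`, has objective value equal to the
quadratic model of the envelope around `x`. -/
lemma envelope_upper (x y p : X) (r : ℝ) :
    r + 1 / 2 * ‖p - y‖ ^ 2
      = r + 1 / 2 * ‖p - x‖ ^ 2 + ⟪x - p, y - x⟫ + 1 / 2 * ‖y - x‖ ^ 2 := by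
  have h1 : p - y = -((x - p) + (y - x)) := by abel
  rw [h1, norm_neg, norm_add_sq_real, norm_sub_rev p x]
  ring

end Envelope

/-- Let `h : X → (−∞,+∞]` be proper lsc convex with `{h ≤ 0} ≠ ∅`, let
`e_h` be its Moreau envelope and `P_h` its proximal mapping.  Then `e_h` is convex and
continuously differentiable with `∇e_h = Id − P_h`, the set `{e_h ≤ 0}` is nonempty, and
the subgradient projector `Q` of `g := e_h` satisfies `Q(x) = x` if `e_h(x) ≤ 0` and
otherwise
`Q(x) = ((e_h(x) − 2h(P_h x))/(2(e_h(x) − h(P_h x)))) x + (e_h(x)/(2(e_h(x) − h(P_h x)))) P_h x`. -/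
theorem subgradient_projector_of_moreau_envelope
    {X : Type*} [NormedAddCommGroup X] [InnerProductSpace ℝ X] [FiniteDimensional ℝ X]
    (h : X → EReal)
    (hbot : ∀ x, h x ≠ ⊥) (htop : ∃ x, h x ≠ ⊤)
    (hlsc : LowerSemicontinuous h)
    (hconv : Convex ℝ {q : X × ℝ | h q.1 ≤ (q.2 : EReal)})
    (hlev : ∃ x, h x ≤ (0 : EReal))
    (e : X → ℝ)
    (he : ∀ x : X, (e x : EReal) = ⨅ w : X, h w + ((1 / 2 * ‖w - x‖ ^ 2 : ℝ) : EReal))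
    (P : X → X)
    (hP : ∀ x w : X, h (P x) + ((1 / 2 * ‖P x - x‖ ^ 2 : ℝ) : EReal)
        ≤ h w + ((1 / 2 * ‖w - x‖ ^ 2 : ℝ) : EReal))
    (e' : X → X) (he' : ∀ x, ¬ e x ≤ 0 → HasGradientAt e (e' x) x)
    (Q : X → X)
    (hQ : ∀ x, Q x = if e x ≤ 0 then x else x - (e x / ‖e' x‖ ^ 2) • e' x) :
    ConvexOn ℝ Set.univ e ∧
      (∀ x, HasGradientAt e (x - P x) x) ∧
      Continuous P ∧
      {x : X | e x ≤ 0}.Nonempty ∧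
      (∀ x, e x ≤ 0 → Q x = x) ∧
      (∀ x, ¬ e x ≤ 0 →
        Q x = ((e x - 2 * (h (P x)).toReal) / (2 * (e x - (h (P x)).toReal))) • x +
          (e x / (2 * (e x - (h (P x)).toReal))) • P x) := by
  have hle : ∀ x w, (e x : EReal) ≤ h w + ((1 / 2 * ‖w - x‖ ^ 2 : ℝ) : EReal) := fun x w => by
    rw [he x]; exact iInf_le _ w
  have hfin : ∀ x, h (P x) ≠ ⊤ := by
    intro x hx
    obtain ⟨w, hw⟩ := htop
    have h1 := hP x w
    rw [hx, EReal.top_add_coe, top_le_iff] at h1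
    lift h w to ℝ using ⟨hw, hbot w⟩ with c
    exact EReal.coe_ne_top _ ((EReal.coe_add _ _).trans h1)
  have hr : ∀ x, h (P x) = ((h (P x)).toReal : EReal) := fun x =>
    (EReal.coe_toReal (hfin x) (hbot _)).symm
  set r : X → ℝ := fun x => (h (P x)).toReal
  have heq : ∀ x, e x = r x + 1 / 2 * ‖P x - x‖ ^ 2 := by
    intro x
    have h1 : (e x : EReal) = h (P x) + ((1 / 2 * ‖P x - x‖ ^ 2 : ℝ) : EReal) :=
      le_antisymm (hle x (P x)) (by rw [he x]; exact le_iInf (hP x))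
    rw [hr x, ← EReal.coe_add] at h1
    exact EReal.coe_injective h1
  have hlow : ∀ x y,
      e x + ⟪x - P x, y - x⟫ + 1 / 2 * ‖(y - P y) - (x - P x)‖ ^ 2 ≤ e y := by
    intro x y
    rw [heq x, heq y]
    exact envelope_lower (prox_variational hconv (hr x) (hr y) (hP x))
  have hup : ∀ x y, e y ≤ e x + ⟪x - P x, y - x⟫ + 1 / 2 * ‖y - x‖ ^ 2 := by
    intro x y
    rw [heq x, ← envelope_upper]
    have h1 := hle y (P x)
    rw [hr x, ← EReal.coe_add] at h1
    exact EReal.coe_le_coe_iff.1 h1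
  have hsub : ∀ x y, e x + ⟪x - P x, y - x⟫ ≤ e y := fun x y => by
    have := hlow x y
    have := sq_nonneg ‖(y - P y) - (x - P x)‖
    linarith
  have hgrad : ∀ x, HasGradientAt e (x - P x) x := by
    intro x
    rw [hasGradientAt_iff_isLittleO]
    have hO : (fun y => e y - e x - ⟪x - P x, y - x⟫) =O[𝓝 x] fun y => ‖y - x‖ ^ 2 := by
      refine Asymptotics.IsBigO.of_bound (1 / 2) (Eventually.of_forall fun y => ?_)
      have h1 := hsub x y
      have h2 := hup x y
      rw [Real.norm_of_nonneg (by linarith), Real.norm_of_nonneg (by positivity)]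
      linarith
    refine hO.trans_isLittleO ?_
    have h3 : Tendsto (fun y => y - x) (𝓝 x) (𝓝 0) := by
      have : Continuous fun y : X => y - x := by fun_prop
      simpa using this.tendsto x
    exact (Asymptotics.isLittleO_norm_pow_id one_lt_two).comp_tendsto h3
  obtain ⟨x₀, hx₀⟩ := hlev
  have hex₀ : e x₀ ≤ 0 := by
    have h1 := (hle x₀ x₀).trans (add_le_add_left hx₀ _)
    simp only [sub_self, norm_zero] at h1
    norm_num at h1
    exact_mod_cast h1
  refine ⟨⟨convex_univ, ?_⟩, hgrad, ?_, ⟨x₀, hex₀⟩, ?_, ?_⟩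
  · -- A function with a subgradient at every point is convex: average the subgradient
    -- inequalities based at the convex combination `z`.
    intro x _ y _ a b ha hb hab
    set z := a • x + b • y with hz
    have h1 := mul_le_mul_of_nonneg_left (hsub z x) ha
    have h2 := mul_le_mul_of_nonneg_left (hsub z y) hb
    have h3 : a * ⟪z - P z, x - z⟫ + b * ⟪z - P z, y - z⟫ = 0 := by
      rw [← real_inner_smul_right, ← real_inner_smul_right, ← inner_add_right]
      have : a • (x - z) + b • (y - z) = 0 := by
        have : a • (x - z) + b • (y - z) = z - (a + b) • z := by rw [hz]; module
        rw [this, hab, one_smul, sub_self]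
      rw [this, inner_zero_right]
    have h4 : a * e z + b * e z = e z := by rw [← add_mul, hab, one_mul]
    simp only [smul_eq_mul]
    linarith
  · have hlip : LipschitzWith 1 fun x => x - P x := by
      refine LipschitzWith.of_dist_le_mul fun y x => ?_
      rw [dist_eq_norm, dist_eq_norm, NNReal.coe_one, one_mul]
      have h1 := hlow x y
      have h2 := hup x y
      exact le_of_sq_le_sq (by linarith) (norm_nonneg _)
    exact (continuous_id.sub hlip.continuous).congr fun x => sub_sub_cancel x (P x)
  · intro x hx
    rw [hQ x, if_pos hx]
  · intro x hx
    rw [hQ x, if_neg hx, (he' x hx).unique (hgrad x)]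
    have hnorm : ‖x - P x‖ ^ 2 = 2 * (e x - r x) := by
      rw [heq x, norm_sub_rev]; ring
    have hne : e x - r x ≠ 0 := by
      intro h0
      rw [h0, mul_zero, sq_eq_zero_iff, norm_eq_zero] at hnorm
      have h1 := hsub x x₀
      rw [hnorm, inner_zero_left] at h1
      linarith
    change _ = ((e x - 2 * r x) / (2 * (e x - r x))) • x + (e x / (2 * (e x - r x))) • P x
    have hcoef : (e x - 2 * r x) / (2 * (e x - r x)) = 1 - e x / (2 * (e x - r x)) := by
      field_simp
      ring
    rw [hnorm, hcoef]
    module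
end
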